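/- arXiv:2605.07664 — 4 statements merged into one kernel-verified Lean document; each statement's English description precedes it below -/
import Mathlib

section
/- For every series-reduced finite tree T with |T| ≥ 2, the subtree density D(T) lies in the interval [1/2,3/4]; moreover, the set of values {D(T) : T a series-reduced finite tree with |T| ≥ 2} is dense in [1/2,3/4]. -/
/-- A subtree of a graph: a nonempty set of vertices inducing a connected subgraph. -/
def IsSubtree {V : Type*} (G : SimpleGraph V) (S : Finset V) : Prop :=
  S.Nonempty ∧ (G.induce (S : Set V)).Connected

/-- `N(T)`: the number of subtrees. -/
noncomputable def numSubtrees {V : Type*} [Fintype V] (G : SimpleGraph V) : ℕ :=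
  Nat.card {S : Finset V // IsSubtree G S}

/-- `R(T) = Σ_S |S|`: the total number of vertices over all subtrees. -/
noncomputable def totalSubtreeOrder {V : Type*} [Fintype V] (G : SimpleGraph V) : ℕ :=
  ∑ S ∈ (Set.toFinite {S : Finset V | IsSubtree G S}).toFinset, S.card

/-- `μ(T)`: the average subtree order. -/
noncomputable def avgSubtreeOrder {V : Type*} [Fintype V] (G : SimpleGraph V) : ℝ :=
  (totalSubtreeOrder G : ℝ) / (numSubtrees G : ℝ)

/-- `D(T) = μ(T)/|T|`: the subtree density. -/
noncomputable def subtreeDensity {V : Type*} [Fintype V] (G : SimpleGraph V) : ℝ :=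
  avgSubtreeOrder G / (Fintype.card V : ℝ)

/-- A graph is series-reduced if no vertex has degree 2. -/
def SeriesReduced {V : Type*} (G : SimpleGraph V) : Prop :=
  ∀ v : V, Nat.card (G.neighborSet v) ≠ 2

/-- Rooted trees: `join t u` attaches the root of `u` as a further child of the root of `t`. -/
inductive PTree
  | single : PTree
  | join : PTree → PTree → PTree

namespace PTree

/-- Number of children of the root. -/
def deg : PTree → ℕ
  | single => 0
  | join t _ => t.deg + 1

/-- Number of vertices. -/
def size : PTree → ℕ
  | single => 1
  | join t u => t.size + u.size

/-- Number of subtrees containing the root. -/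
def rootCount : PTree → ℕ
  | single => 1
  | join t u => t.rootCount * (1 + u.rootCount)

/-- Total order of the subtrees containing the root. -/
def rootTotal : PTree → ℕ
  | single => 1
  | join t u => t.rootTotal * (1 + u.rootCount) + t.rootCount * u.rootTotal

/-- Number of subtrees. -/
def count : PTree → ℕ
  | single => 1
  | join t u => t.count + u.count + t.rootCount * u.rootCount

/-- Total order of the subtrees. -/
def total : PTree → ℕ
  | single => 1
  | join t u => t.total + u.total + (t.rootTotal * u.rootCount + t.rootCount * u.rootTotal)

/-- No vertex other than the root has exactly one child. -/
def Good : PTree → Prop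
  | single => True
  | join t u => t.Good ∧ u.Good ∧ u.deg ≠ 1

end PTree

/-- Five numbers attached to a rooted tree: the order, the number of subtrees containing the root,
the number of subtrees, and the excesses of the total orders over half of the trivial bound. -/
structure Profile where
  n : ℝ
  a : ℝ
  s : ℝ
  A : ℝ
  S : ℝ

namespace Profile

/-- The profile of the join of two rooted trees. -/
noncomputable def join (p q : Profile) : Profile where
  n := p.n + q.n
  a := p.a * (1 + q.a)
  s := p.s * (1 + q.a) + p.a * q.s - q.n * p.a / 2
  A := p.A + q.A + p.a * q.a
  S := p.S + q.S + p.s * q.a + p.a * q.s - q.n * p.A / 2 - p.n * q.A / 2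

/-- The profile of a single vertex. -/
noncomputable def leaf : Profile := ⟨1, 1, 1 / 2, 1, 1 / 2⟩

/-- The profile of a root with two leaves. -/
noncomputable def cherry : Profile := ⟨3, 4, 2, 6, 1⟩

/-- The inequalities satisfied by all other rooted trees without vertices having a single child. -/
structure Big (p : Profile) : Prop where
  n_ge : 4 ≤ p.n
  a_ge : 8 ≤ p.a
  n_le_s : p.n ≤ p.s
  a_le_s : p.a / 2 ≤ p.s
  A_le : p.A ≤ 2 * p.a
  four : 4 * p.n ≤ p.S + 4 * p.s
  with_cherry : 0 ≤ p.S + 4 * p.s - 3 * p.n + 1 + 2 * p.a - 3 / 2 * p.A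
  with_leaf : 0 ≤ p.S + 1 / 2 + p.s + p.a / 2 - p.A / 2 - p.n / 2

theorem big_join_leaf {p : Profile} (hp : p = cherry ∨ p.Big) : (p.join leaf).Big := by
  rcases hp with rfl | ⟨h1, h2, h3, h4, h5, h6, h7, h8⟩ <;>
  constructor <;> simp only [join, cherry, leaf] <;> linarith

theorem big_join_cherry {p : Profile} (hp : p = cherry ∨ p.Big) : (p.join cherry).Big := by
  rcases hp with rfl | ⟨h1, h2, h3, h4, h5, h6, h7, h8⟩ <;>
  constructor <;> simp only [join, cherry] <;> linarith

theorem big_cherry_join {q : Profile} (hq : q.Big) : (cherry.join q).Big := by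
  obtain ⟨h1, h2, h3, h4, h5, h6, h7, h8⟩ := hq
  constructor <;> simp only [join, cherry] <;> linarith

theorem big_join_big {p q : Profile} (hp : p.Big) (hq : q.Big) : (p.join q).Big := by
  obtain ⟨h1, h2, h3, h4, h5, h6, h7, h8⟩ := hp
  obtain ⟨k1, k2, k3, k4, k5, k6, k7, k8⟩ := hq
  have e1 := mul_nonneg (sub_nonneg.2 h2) (sub_nonneg.2 k3)
  have e2 := mul_nonneg (sub_nonneg.2 h3) (sub_nonneg.2 k2)
  have e3 := mul_nonneg (sub_nonneg.2 h2) (sub_nonneg.2 k1)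
  have e4 := mul_nonneg (sub_nonneg.2 h1) (sub_nonneg.2 k2)
  have e5 := mul_nonneg (sub_nonneg.2 h4) (sub_nonneg.2 k2)
  have e6 := mul_nonneg (sub_nonneg.2 h5) (sub_nonneg.2 k1)
  have e7 := mul_nonneg (sub_nonneg.2 h1) (sub_nonneg.2 k5)
  have e8 := mul_nonneg (sub_nonneg.2 h2) (sub_nonneg.2 k2)
  have e9 := mul_nonneg (sub_nonneg.2 h2) (sub_nonneg.2 k4)
  constructor <;> simp only [join] <;> linarith

theorem pair_leaf_big {q : Profile} (hq : q.Big) : ((leaf.join leaf).join q).Big := by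
  obtain ⟨h1, h2, h3, h4, h5, h6, h7, h8⟩ := hq
  constructor <;> simp only [join, leaf] <;> linarith

theorem pair_cherry_big {q : Profile} (hq : q.Big) : ((leaf.join cherry).join q).Big := by
  obtain ⟨h1, h2, h3, h4, h5, h6, h7, h8⟩ := hq
  constructor <;> simp only [join, leaf, cherry] <;> linarith

theorem pair_big_big {p q : Profile} (hp : p.Big) (hq : q.Big) :
    ((leaf.join p).join q).Big := by
  obtain ⟨h1, h2, h3, h4, h5, h6, h7, h8⟩ := hp
  obtain ⟨k1, k2, k3, k4, k5, k6, k7, k8⟩ := hq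
  have e1 := mul_nonneg (sub_nonneg.2 h2) (sub_nonneg.2 k3)
  have e2 := mul_nonneg (sub_nonneg.2 h3) (sub_nonneg.2 k2)
  have e3 := mul_nonneg (sub_nonneg.2 h2) (sub_nonneg.2 k1)
  have e4 := mul_nonneg (sub_nonneg.2 h1) (sub_nonneg.2 k2)
  have e5 := mul_nonneg (sub_nonneg.2 h4) (sub_nonneg.2 k2)
  have e6 := mul_nonneg (sub_nonneg.2 h5) (sub_nonneg.2 k1)
  have e7 := mul_nonneg (sub_nonneg.2 h1) (sub_nonneg.2 k5)
  have e8 := mul_nonneg (sub_nonneg.2 h2) (sub_nonneg.2 k2)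
  have e9 := mul_nonneg (sub_nonneg.2 h2) (sub_nonneg.2 k4)
  constructor <;> simp only [join, leaf] <;> linarith

theorem join_right_comm (p q r : Profile) : (p.join q).join r = (p.join r).join q := by
  simp only [join, mk.injEq]
  refine ⟨?_, ?_, ?_, ?_, ?_⟩ <;> ring

theorem pair_leaf_cherry : ((leaf.join leaf).join cherry).Big := by
  constructor <;> norm_num [join, leaf, cherry]

theorem pair_cherry_cherry : ((leaf.join cherry).join cherry).Big := by
  constructor <;> norm_num [join, leaf, cherry]

theorem pair_leaf_leaf : (leaf.join leaf).join leaf = cherry := by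
  simp only [join, leaf, cherry, mk.injEq]
  norm_num

/-- The profiles of rooted trees without vertices having a single child. -/
def Full (p : Profile) : Prop := p = leaf ∨ p = cherry ∨ p.Big

theorem Full.pair {p q : Profile} (hp : p.Full) (hq : q.Full) :
    (leaf.join p).join q = cherry ∨ ((leaf.join p).join q).Big := by
  rcases hp with rfl | rfl | hp <;> rcases hq with rfl | rfl | hq
  · exact .inl pair_leaf_leaf
  · exact .inr pair_leaf_cherry
  · exact .inr (pair_leaf_big hq)
  · exact .inr (join_right_comm _ _ _ ▸ pair_leaf_cherry)
  · exact .inr pair_cherry_cherry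
  · exact .inr (pair_cherry_big hq)
  · exact .inr (join_right_comm _ _ _ ▸ pair_leaf_big hp)
  · exact .inr (join_right_comm _ _ _ ▸ pair_cherry_big hp)
  · exact .inr (pair_big_big hp hq)

theorem Full.join {p q : Profile} (hp : p = cherry ∨ p.Big) (hq : q.Full) : (p.join q).Big := by
  rcases hq with rfl | rfl | hq
  · exact big_join_leaf hp
  · exact big_join_cherry hp
  · rcases hp with rfl | hp
    · exact big_cherry_join hq
    · exact big_join_big hp hq

end Profile

namespace PTree

open Profile

/-- The profile of a rooted tree. -/
noncomputable def profile (t : PTree) : Profile where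
  n := t.size
  a := t.rootCount
  s := t.rootTotal - t.size * t.rootCount / 2
  A := t.count
  S := t.total - t.size * t.count / 2

theorem profile_single : single.profile = leaf := by
  norm_num [profile, leaf, size, rootCount, rootTotal, count, total]

theorem profile_join (t u : PTree) : (join t u).profile = t.profile.join u.profile := by
  simp only [profile, Profile.join, size, rootCount, rootTotal, count, total, Profile.mk.injEq]
  push_cast
  refine ⟨rfl, rfl, ?_, rfl, ?_⟩ <;> ring

theorem eq_single_of_deg_eq_zero {t : PTree} (h : t.deg = 0) : t = single := by
  cases t with
  | single => rfl
  | join t u => simp [deg] at h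

theorem Good.profile_classification {t : PTree} (ht : t.Good) :
    (t.deg = 1 → ∃ p : Profile, p.Full ∧ t.profile = leaf.join p) ∧
    (2 ≤ t.deg → t.profile = cherry ∨ t.profile.Big) := by
  induction t with
  | single => simp [deg]
  | join t u iht ihu =>
    obtain ⟨ht, hu, hd⟩ := ht
    have full_u : u.profile.Full := by
      rcases Nat.eq_zero_or_pos u.deg with h | h
      · exact .inl (eq_single_of_deg_eq_zero h ▸ profile_single)
      · exact .inr ((ihu hu).2 (by omega))
    rw [profile_join]
    simp only [deg]
    refine ⟨fun h => ⟨_, full_u, ?_⟩, fun h => ?_⟩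
    · rw [eq_single_of_deg_eq_zero (t := t) (by omega), profile_single]
    · by_cases h1 : t.deg = 1
      · obtain ⟨p, hp, e⟩ := (iht ht).1 h1
        rw [e]
        exact hp.pair full_u
      · exact .inr (full_u.join ((iht ht).2 (by omega)))

/-- The lower density bound for a tree rooted at a leaf. -/
theorem Good.half_le {t : PTree} (ht : t.Good) (hd : t.deg = 1) :
    (t.size : ℝ) * t.count / 2 ≤ t.total := by
  obtain ⟨p, hp, e⟩ := ht.profile_classification.1 hd
  have hS : (t.total : ℝ) - t.size * t.count / 2 = (leaf.join p).S := congrArg Profile.S e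
  suffices 0 ≤ (leaf.join p).S by linarith
  rcases hp with rfl | rfl | hp
  · norm_num [Profile.join, leaf]
  · norm_num [Profile.join, leaf, cherry]
  · have := hp.with_leaf
    simp only [Profile.join, leaf]
    linarith

theorem one_le_size (t : PTree) : 1 ≤ t.size := by
  induction t with
  | single => exact le_rfl
  | join t u iht _ => exact iht.trans (Nat.le_add_right _ _)

theorem one_le_rootCount (t : PTree) : 1 ≤ t.rootCount := by
  induction t with
  | single => exact le_rfl
  | join t u iht _ => exact iht.trans (Nat.le_mul_of_pos_right _ (by omega))

theorem rootCount_le_count (t : PTree) : t.rootCount ≤ t.count := by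
  induction t with
  | single => exact le_rfl
  | join t u iht ihu =>
    simp only [rootCount, count]
    linarith [u.one_le_rootCount]

theorem Good.upper_bounds {t : PTree} (ht : t.Good) :
    4 * (t.rootTotal : ℝ) ≤ (3 * t.size + 1 - t.deg) * t.rootCount ∧
    4 * ((t.total : ℝ) - t.rootTotal) ≤ (3 * t.size - 1) * (t.count - t.rootCount) := by
  induction t with
  | single => norm_num [rootTotal, size, deg, rootCount, total, count]
  | join t u iht ihu =>
    obtain ⟨ht, hu, hd⟩ := ht
    obtain ⟨h1, h2⟩ := iht ht
    obtain ⟨k1, k2⟩ := ihu hu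
    have ta : (1 : ℝ) ≤ t.rootCount := mod_cast t.one_le_rootCount
    have ua : (1 : ℝ) ≤ u.rootCount := mod_cast u.one_le_rootCount
    have tA : (t.rootCount : ℝ) ≤ t.count := mod_cast t.rootCount_le_count
    have uA : (u.rootCount : ℝ) ≤ u.count := mod_cast u.rootCount_le_count
    have tn : (1 : ℝ) ≤ t.size := mod_cast t.one_le_size
    have un : (1 : ℝ) ≤ u.size := mod_cast u.one_le_size
    have root_u : 4 * (u.rootTotal : ℝ) ≤ (3 * u.size - 1) * (1 + u.rootCount) ∧
        4 * (u.total : ℝ) ≤ (3 * (t.size + u.size) - 1) * u.count := by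
      rcases Nat.eq_zero_or_pos u.deg with h | h
      · rw [eq_single_of_deg_eq_zero h]
        norm_num [rootTotal, size, rootCount, total, count]
        linarith
      · have hd : (2 : ℝ) ≤ u.deg := mod_cast (by omega : 2 ≤ u.deg)
        constructor <;> nlinarith
    simp only [rootTotal, size, deg, rootCount, total, count]
    push_cast
    constructor
    · nlinarith [mul_le_mul_of_nonneg_right h1 (by linarith : (0 : ℝ) ≤ 1 + u.rootCount),
        mul_le_mul_of_nonneg_left root_u.1 (by linarith : (0 : ℝ) ≤ t.rootCount)]
    · nlinarith [root_u.2, mul_nonneg (by linarith : (0 : ℝ) ≤ u.size) (sub_nonneg.2 tA)]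

/-- The upper density bound for a tree rooted at a leaf. -/
theorem Good.le_three_quarters {t : PTree} (ht : t.Good) (hd : t.deg = 1) :
    (t.total : ℝ) ≤ 3 / 4 * t.size * t.count := by
  obtain ⟨h1, h2⟩ := ht.upper_bounds
  rw [hd] at h1
  have tA : (t.rootCount : ℝ) ≤ t.count := mod_cast t.rootCount_le_count
  push_cast at h1
  nlinarith

/-- A root with `L` leaves. -/
def star : ℕ → PTree
  | 0 => single
  | L + 1 => join (star L) single

/-- A star with `L` leaves, extended upwards by `j` vertices carrying one leaf each. -/
def cat (L : ℕ) : ℕ → PTree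
  | 0 => star L
  | j + 1 => join (join single single) (cat L j)

/-- The tree `cat L j` with a leaf attached to its root, rooted at that leaf. -/
def broom (L j : ℕ) : PTree := join single (cat L j)

theorem deg_star (L : ℕ) : (star L).deg = L := by
  induction L with
  | zero => rfl
  | succ L ih => simp [star, deg, ih]

theorem good_star (L : ℕ) : (star L).Good := by
  induction L with
  | zero => trivial
  | succ L ih => exact ⟨ih, trivial, by simp [deg]⟩

theorem deg_cat_ne_one {L : ℕ} (hL : L ≠ 1) (j : ℕ) : (cat L j).deg ≠ 1 := by
  cases j with
  | zero => simpa [cat, deg_star]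
  | succ j => simp [cat, deg]

theorem good_cat {L : ℕ} (hL : L ≠ 1) (j : ℕ) : (cat L j).Good := by
  induction j with
  | zero => exact good_star L
  | succ j ih => exact ⟨⟨trivial, trivial, by simp [deg]⟩, ih, deg_cat_ne_one hL j⟩

theorem good_broom {L : ℕ} (hL : L ≠ 1) (j : ℕ) : (broom L j).Good :=
  ⟨trivial, good_cat hL j, deg_cat_ne_one hL j⟩

theorem size_star (L : ℕ) : (star L).size = L + 1 := by
  induction L with
  | zero => rfl
  | succ L ih => simp [star, size, ih]

theorem size_cat (L j : ℕ) : (cat L j).size = 2 * j + L + 1 := by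
  induction j with
  | zero => simp [cat, size_star]
  | succ j ih => simp only [cat, size, ih]; ring

theorem size_broom (L j : ℕ) : (broom L j).size = 2 * j + L + 2 := by
  simp only [broom, size, size_cat]; ring

theorem star_values (L : ℕ) :
    ((star L).rootCount : ℝ) = 2 ^ L ∧ ((star L).rootTotal : ℝ) = 2 ^ L * (1 + L / 2) ∧
    ((star L).count : ℝ) = 2 ^ L + L ∧ ((star L).total : ℝ) = 2 ^ L * (1 + L / 2) + L := by
  induction L with
  | zero => norm_num [star, rootCount, rootTotal, count, total]
  | succ L ih =>
    obtain ⟨h1, h2, h3, h4⟩ := ih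
    simp only [star, rootCount, rootTotal, count, total]
    push_cast
    rw [h1, h2, h3, h4]
    refine ⟨?_, ?_, ?_, ?_⟩ <;> ring

theorem succ_sq_le_four_mul_two_pow (L : ℕ) : ((L : ℝ) + 1) ^ 2 ≤ 4 * 2 ^ L := by
  induction L with
  | zero => norm_num
  | succ L ih =>
    have : (L : ℝ) + 1 ≤ 2 ^ L := mod_cast Nat.lt_two_pow_self (n := L)
    push_cast
    rw [pow_succ (2 : ℝ)]
    linarith

/-- The average order of the subtrees of `cat L j`, and of those containing the root, is within a
constant of `(3 * j + L) / 2`. -/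
theorem cat_estimates (L j : ℕ) :
    ((3 * j + L : ℝ) / 2 ≤ 2 * (cat L j).rootCount) ∧
    ((cat L j).count : ℝ) ≤ 2 * (cat L j).rootCount + L ∧
    (L : ℝ) ≤ (cat L j).rootCount ∧
    (cat L j).rootTotal - (3 * j + L : ℝ) / 2 * (cat L j).rootCount ≤ (cat L j).rootCount ∧
    -((cat L j).rootCount : ℝ) + (3 * j + L + 1) ≤
      (cat L j).rootTotal - (3 * j + L : ℝ) / 2 * (cat L j).rootCount ∧
    |(cat L j).total - (3 * j + L : ℝ) / 2 * (cat L j).count| ≤ 13 * (cat L j).rootCount := by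
  induction j with
  | zero =>
    obtain ⟨h1, h2, h3, h4⟩ := star_values L
    have hL : (L : ℝ) + 1 ≤ 2 ^ L := mod_cast Nat.lt_two_pow_self (n := L)
    have hL' := succ_sq_le_four_mul_two_pow L
    have h0 : (0 : ℝ) ≤ L := L.cast_nonneg
    simp only [cat, h1, h2, h3, h4, abs_le]
    push_cast
    refine ⟨?_, ?_, ?_, ?_, ?_, ?_, ?_⟩ <;> nlinarith
  | succ j ih =>
    obtain ⟨h1, h2, h3, h4, h5, h6⟩ := ih
    have h0 : (0 : ℝ) ≤ L := L.cast_nonneg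
    have hj : (0 : ℝ) ≤ j := j.cast_nonneg
    have ha : (1 : ℝ) ≤ (cat L j).rootCount := mod_cast (cat L j).one_le_rootCount
    rw [abs_le] at h6
    simp only [cat, rootCount, rootTotal, count, total, abs_le]
    push_cast
    refine ⟨?_, ?_, ?_, ?_, ?_, ?_, ?_⟩ <;> nlinarith

theorem broom_estimate (L j : ℕ) :
    |(broom L j).total - (3 * j + L : ℝ) / 2 * (broom L j).count| ≤ 20 * (broom L j).count := by
  obtain ⟨h1, h2, h3, h4, h5, h6⟩ := cat_estimates L j
  have h0 : (0 : ℝ) ≤ L := L.cast_nonneg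
  have hj : (0 : ℝ) ≤ j := j.cast_nonneg
  have tA : ((cat L j).rootCount : ℝ) ≤ (cat L j).count := mod_cast (cat L j).rootCount_le_count
  rw [abs_le] at *
  simp only [broom, rootCount, rootTotal, count, total]
  push_cast
  constructor <;> nlinarith

/-- The densities of the trees `broom L j` with `2 ≤ L` are dense in `[1/2, 3/4]`. -/
theorem exists_broom_near {x : ℝ} (hx : x ∈ Set.Icc (1 / 2 : ℝ) (3 / 4)) {ε : ℝ} (hε : 0 < ε) :
    ∃ L j : ℕ, L ≠ 1 ∧
      |(broom L j).total / (broom L j).count / (broom L j).size - x| < ε := by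
  obtain ⟨hx1, hx2⟩ := hx
  obtain ⟨m, hm⟩ := exists_nat_gt (30 / ε)
  have hθ : 0 ≤ (4 * x - 2) * m := mul_nonneg (by linarith) m.cast_nonneg
  set k := ⌊(4 * x - 2) * m⌋₊ with hk
  have k1 : (k : ℝ) ≤ (4 * x - 2) * m := Nat.floor_le hθ
  have k2 : (4 * x - 2) * m < k + 1 := Nat.lt_floor_add_one _
  have hm0 : (0 : ℝ) ≤ m := m.cast_nonneg
  have km : k ≤ m := by
    have : (k : ℝ) ≤ m := by nlinarith
    exact_mod_cast this
  refine ⟨2 * (m - k) + 2, k, by omega, ?_⟩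
  set t := broom (2 * (m - k) + 2) k with ht
  have hsize : (t.size : ℝ) = 2 * m + 4 := by
    rw [ht, size_broom]
    exact_mod_cast (by omega : 2 * k + (2 * (m - k) + 2) + 2 = 2 * m + 4)
  have est := broom_estimate (2 * (m - k) + 2) k
  rw [← ht] at est
  push_cast [Nat.cast_sub km] at est
  have hc : (0 : ℝ) < t.count := by
    exact_mod_cast Nat.lt_of_lt_of_le t.one_le_rootCount t.rootCount_le_count
  have hn : (0 : ℝ) < 2 * m + 4 := by linarith
  have hm' : 30 < ε * m := by rwa [div_lt_iff₀' hε] at hm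
  have near : |(t.total : ℝ) - x * (t.count * (2 * m + 4))| ≤ 30 * t.count := by
    rw [abs_le] at *
    constructor <;> nlinarith
  have hp : (0 : ℝ) < t.count * (2 * m + 4) := by positivity
  rw [hsize, div_div, div_sub' hp.ne', abs_div, abs_of_pos hp, div_lt_iff₀ hp,
    mul_comm (_ * _) x]
  nlinarith

end PTree

section Subtrees

open Relation

/-- Adjacency in `G` inside the vertex set `S`. -/
def AdjIn {V : Type*} (G : SimpleGraph V) (S : Finset V) (u v : V) : Prop :=
  G.Adj u v ∧ u ∈ S ∧ v ∈ S

theorem AdjIn.symm {V : Type*} {G : SimpleGraph V} {S : Finset V} {u v : V} (h : AdjIn G S u v) :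
    AdjIn G S v u :=
  ⟨h.1.symm, h.2.2, h.2.1⟩

theorem isSubtree_iff {V : Type*} (G : SimpleGraph V) (S : Finset V) :
    IsSubtree G S ↔ S.Nonempty ∧ ∀ x ∈ S, ∀ y ∈ S, ReflTransGen (AdjIn G S) x y := by
  refine and_congr_right fun hS => ?_
  have : Nonempty (S : Set V) := hS.to_subtype
  rw [SimpleGraph.connected_iff, and_iff_left this]
  refine ⟨fun h x hx y hy => ?_, fun h x y => ?_⟩
  · have := (SimpleGraph.reachable_iff_reflTransGen _ _).1 (h ⟨x, hx⟩ ⟨y, hy⟩)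
    exact this.lift Subtype.val fun u v huv => ⟨huv, u.2, v.2⟩
  · rw [SimpleGraph.reachable_iff_reflTransGen]
    obtain ⟨x, hx⟩ := x
    have key : ∀ z, ReflTransGen (AdjIn G S) x z →
        ∃ hz : z ∈ S, ReflTransGen (G.induce (S : Set V)).Adj ⟨x, hx⟩ ⟨z, hz⟩ := by
      intro z hz
      induction hz with
      | refl => exact ⟨hx, .refl⟩
      | tail _ huv ih =>
        obtain ⟨hu, h'⟩ := ih
        exact ⟨huv.2.2, h'.tail huv.1⟩
    exact (key y (h x hx y y.2)).2

theorem isSubtree_univ_iff {V : Type*} [Fintype V] (G : SimpleGraph V) :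
    IsSubtree G Finset.univ ↔ G.Connected := by
  rw [isSubtree_iff, SimpleGraph.connected_iff, Finset.univ_nonempty_iff, and_comm]
  have : AdjIn G Finset.univ = G.Adj := by
    ext
    simp [AdjIn]
  simp [this, SimpleGraph.Preconnected, SimpleGraph.reachable_iff_reflTransGen]

theorem IsSubtree.map {V W : Type*} {G : SimpleGraph V} {H : SimpleGraph W} (e : G ≃g H)
    {S : Finset V} (h : IsSubtree G S) : IsSubtree H (S.map e.toEquiv.toEmbedding) := by
  rw [isSubtree_iff] at h ⊢
  refine ⟨h.1.map, ?_⟩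
  intro x hx y hy
  obtain ⟨x, hx', rfl⟩ := Finset.mem_map.1 hx
  obtain ⟨y, hy', rfl⟩ := Finset.mem_map.1 hy
  exact (h.2 x hx' y hy').lift e.toEquiv.toEmbedding fun u v huv =>
    ⟨e.map_adj_iff.2 huv.1, Finset.mem_map_of_mem _ huv.2.1, Finset.mem_map_of_mem _ huv.2.2⟩

theorem isSubtree_map_iff {V W : Type*} {G : SimpleGraph V} {H : SimpleGraph W} (e : G ≃g H)
    (S : Finset V) : IsSubtree H (S.map e.toEquiv.toEmbedding) ↔ IsSubtree G S := by
  refine ⟨fun h => ?_, fun h => h.map e⟩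
  convert h.map e.symm
  ext x
  rw [Finset.mem_map_equiv, Finset.mem_map_equiv]
  change _ ↔ e.symm (e x) ∈ S
  simp

/-- The graph obtained from disjoint copies of `G` and `H` by joining `r` and `w` by an edge. -/
def joinGraph {V W : Type*} (G : SimpleGraph V) (r : V) (H : SimpleGraph W) (w : W) :
    SimpleGraph (V ⊕ W) :=
  (G ⊕g H) ⊔ SimpleGraph.edge (Sum.inl r) (Sum.inr w)

section joinGraph

variable {V W : Type*} {G : SimpleGraph V} {r : V} {H : SimpleGraph W} {w : W}

@[simp]
theorem joinGraph_adj_inl_inl (x y : V) :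
    (joinGraph G r H w).Adj (.inl x) (.inl y) ↔ G.Adj x y := by
  simp [joinGraph, SimpleGraph.edge_adj]

@[simp]
theorem joinGraph_adj_inr_inr (x y : W) :
    (joinGraph G r H w).Adj (.inr x) (.inr y) ↔ H.Adj x y := by
  simp [joinGraph, SimpleGraph.edge_adj]

@[simp]
theorem joinGraph_adj_inl_inr (x : V) (y : W) :
    (joinGraph G r H w).Adj (.inl x) (.inr y) ↔ x = r ∧ y = w := by
  simp [joinGraph, SimpleGraph.edge_adj]

@[simp]
theorem joinGraph_adj_inr_inl (x : W) (y : V) :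
    (joinGraph G r H w).Adj (.inr x) (.inl y) ↔ y = r ∧ x = w := by
  simp [joinGraph, SimpleGraph.edge_adj, and_comm]

theorem reflTransGen_left {S : Finset V} {T : Finset W} {x y : V ⊕ W}
    (h : ReflTransGen (AdjIn (joinGraph G r H w) (S.disjSum T)) x y) :
    ReflTransGen (AdjIn G S) (Sum.elim id (fun _ => r) x) (Sum.elim id (fun _ => r) y) := by
  refine h.lift' _ ?_
  rintro (a | a) (b | b) ⟨hab, ha, hb⟩
  · exact .single ⟨by simpa using hab, by simpa using ha, by simpa using hb⟩
  · obtain ⟨rfl, -⟩ := (joinGraph_adj_inl_inr _ _).1 hab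
    exact .refl
  · obtain ⟨rfl, -⟩ := (joinGraph_adj_inr_inl _ _).1 hab
    exact .refl
  · exact .refl

theorem reflTransGen_right {S : Finset V} {T : Finset W} {x y : V ⊕ W}
    (h : ReflTransGen (AdjIn (joinGraph G r H w) (S.disjSum T)) x y) :
    ReflTransGen (AdjIn H T) (Sum.elim (fun _ => w) id x) (Sum.elim (fun _ => w) id y) := by
  refine h.lift' _ ?_
  rintro (a | a) (b | b) ⟨hab, ha, hb⟩
  · exact .refl
  · obtain ⟨-, rfl⟩ := (joinGraph_adj_inl_inr _ _).1 hab
    exact .refl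
  · obtain ⟨-, rfl⟩ := (joinGraph_adj_inr_inl _ _).1 hab
    exact .refl
  · exact .single ⟨by simpa using hab, by simpa using ha, by simpa using hb⟩

theorem mem_of_reflTransGen_inl_inr {S : Finset V} {T : Finset W} {x : V} {y : W}
    (h : ReflTransGen (AdjIn (joinGraph G r H w) (S.disjSum T)) (.inl x) (.inr y)) :
    r ∈ S ∧ w ∈ T := by
  by_contra hrw
  have key : ∀ z, ReflTransGen (AdjIn (joinGraph G r H w) (S.disjSum T)) (.inl x) z →
      z.isLeft = true := by
    intro z hz
    induction hz with
    | refl => rfl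
    | @tail a b _ hab ih =>
      obtain ⟨hab, ha, hb⟩ := hab
      rcases a with a | a <;> rcases b with b | b
      · rfl
      · obtain ⟨rfl, rfl⟩ := (joinGraph_adj_inl_inr _ _).1 hab
        exact absurd ⟨by simpa using ha, by simpa using hb⟩ hrw
      · rfl
      · simp at ih
  simpa using key _ h

/-- A subtree of a join is a subtree of one of the two parts, or the union of two subtrees
containing the endpoints of the joining edge. -/
theorem isSubtree_joinGraph_iff (S : Finset V) (T : Finset W) :
    IsSubtree (joinGraph G r H w) (S.disjSum T) ↔
      (IsSubtree G S ∧ T = ∅) ∨ (S = ∅ ∧ IsSubtree H T) ∨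
        ((IsSubtree G S ∧ r ∈ S) ∧ (IsSubtree H T ∧ w ∈ T)) := by
  have left : IsSubtree (joinGraph G r H w) (S.disjSum T) → S.Nonempty → IsSubtree G S := by
    simp only [isSubtree_iff]
    refine fun h hS => ⟨hS, fun x hx y hy => ?_⟩
    simpa using reflTransGen_left (h.2 (.inl x) (by simpa) (.inl y) (by simpa))
  have right : IsSubtree (joinGraph G r H w) (S.disjSum T) → T.Nonempty → IsSubtree H T := by
    simp only [isSubtree_iff]
    refine fun h hT => ⟨hT, fun x hx y hy => ?_⟩
    simpa using reflTransGen_right (h.2 (.inr x) (by simpa) (.inr y) (by simpa))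
  have lift_left : IsSubtree G S → ∀ x ∈ S, ∀ y ∈ S,
      ReflTransGen (AdjIn (joinGraph G r H w) (S.disjSum T)) (.inl x) (.inl y) := by
    intro h x hx y hy
    refine (((isSubtree_iff _ _).1 h).2 x hx y hy).lift Sum.inl ?_
    rintro u v ⟨huv, hu, hv⟩
    exact ⟨by simpa, by simpa, by simpa⟩
  have lift_right : IsSubtree H T → ∀ x ∈ T, ∀ y ∈ T,
      ReflTransGen (AdjIn (joinGraph G r H w) (S.disjSum T)) (.inr x) (.inr y) := by
    intro h x hx y hy
    refine (((isSubtree_iff _ _).1 h).2 x hx y hy).lift Sum.inr ?_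
    rintro u v ⟨huv, hu, hv⟩
    exact ⟨by simpa, by simpa, by simpa⟩
  constructor
  · intro h
    rcases S.eq_empty_or_nonempty with hS | hS
    · refine .inr (.inl ⟨hS, right h ?_⟩)
      by_contra hT
      rw [Finset.not_nonempty_iff_eq_empty] at hT
      subst hS hT
      simpa using h.1
    · rcases T.eq_empty_or_nonempty with hT | hT
      · exact .inl ⟨left h hS, hT⟩
      · obtain ⟨x, hx⟩ := hS
        obtain ⟨y, hy⟩ := hT
        have := mem_of_reflTransGen_inl_inr
          (((isSubtree_iff _ _).1 h).2 (.inl x) (by simpa) (.inr y) (by simpa))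
        exact .inr (.inr ⟨⟨left h ⟨x, hx⟩, this.1⟩, right h ⟨y, hy⟩, this.2⟩)
  · rintro (⟨h, rfl⟩ | ⟨rfl, h⟩ | ⟨⟨hS, hr⟩, hT, hw⟩)
    · rw [isSubtree_iff]
      refine ⟨by simpa using h.1, ?_⟩
      rintro (x | x) hx (y | y) hy <;> simp at hx hy
      exact lift_left h x hx y hy
    · rw [isSubtree_iff]
      refine ⟨by simpa using h.1, ?_⟩
      rintro (x | x) hx (y | y) hy <;> simp at hx hy
      exact lift_right h x hx y hy
    · have mid : AdjIn (joinGraph G r H w) (S.disjSum T) (.inl r) (.inr w) :=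
        ⟨by simp, by simpa, by simpa⟩
      rw [isSubtree_iff]
      refine ⟨⟨.inl r, by simpa⟩, ?_⟩
      rintro (x | x) hx (y | y) hy <;> simp at hx hy
      · exact lift_left hS x hx y hy
      · exact (lift_left hS x hx r hr).trans (.head mid (lift_right hT w hw y hy))
      · exact (lift_right hT x hx w hw).trans (.head mid.symm (lift_left hS r hr y hy))
      · exact lift_right hT x hx y hy

theorem joinGraph_connected_iff [Fintype V] [Fintype W] :
    (joinGraph G r H w).Connected ↔ G.Connected ∧ H.Connected := by
  have : Nonempty V := ⟨r⟩
  have : Nonempty W := ⟨w⟩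
  rw [← isSubtree_univ_iff, ← isSubtree_univ_iff, ← isSubtree_univ_iff,
    ← Finset.univ_disjSum_univ, isSubtree_joinGraph_iff]
  simp [Finset.univ_nonempty.ne_empty]

theorem joinGraph_isTree [Fintype V] [Fintype W] (hG : G.IsTree) (hH : H.IsTree) :
    (joinGraph G r H w).IsTree := by
  classical
  rw [SimpleGraph.isTree_iff_connected_and_card] at hG hH ⊢
  refine ⟨joinGraph_connected_iff.2 ⟨hG.1, hH.1⟩, ?_⟩
  have hcard : Nat.card (joinGraph G r H w).edgeSet = Nat.card (G ⊕g H).edgeSet + 1 := by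
    have : (joinGraph G r H w).edgeSet = insert s(.inl r, .inr w) (G ⊕g H).edgeSet := by
      rw [joinGraph, SimpleGraph.edgeSet_sup, SimpleGraph.edgeSet_edge_of_ne Sum.inl_ne_inr, Set.union_comm,
        Set.singleton_union]
    rw [this, Nat.card_coe_set_eq, Nat.card_coe_set_eq]
    exact Set.ncard_insert_of_notMem (by simp)
  rw [hcard, Nat.card_congr SimpleGraph.edgeSetSumEquiv, Nat.card_sum, Nat.card_sum, ← hG.2,
    ← hH.2]
  ring

theorem card_neighborSet_joinGraph_inl [Finite V] [Finite W] (x : V) [Decidable (x = r)] :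
    Nat.card ((joinGraph G r H w).neighborSet (.inl x)) =
      Nat.card (G.neighborSet x) + if x = r then 1 else 0 := by
  have hL : Nat.card (G.neighborSet x) = (Sum.inl '' G.neighborSet x : Set (V ⊕ W)).ncard := by
    rw [Set.ncard_image_of_injective _ Sum.inl_injective, Nat.card_coe_set_eq]
  rw [hL, Nat.card_coe_set_eq]
  split_ifs with h
  · rw [← Set.ncard_insert_of_notMem (a := (Sum.inr w : V ⊕ W)) (by simp)]
    congr 1
    ext (y | y) <;> simp [h]
  · congr 1
    ext (y | y) <;> simp [h]

theorem card_neighborSet_joinGraph_inr [Finite V] [Finite W] (x : W) [Decidable (x = w)] :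
    Nat.card ((joinGraph G r H w).neighborSet (.inr x)) =
      Nat.card (H.neighborSet x) + if x = w then 1 else 0 := by
  have hR : Nat.card (H.neighborSet x) = (Sum.inr '' H.neighborSet x : Set (V ⊕ W)).ncard := by
    rw [Set.ncard_image_of_injective _ Sum.inr_injective, Nat.card_coe_set_eq]
  rw [hR, Nat.card_coe_set_eq]
  split_ifs with h
  · rw [← Set.ncard_insert_of_notMem (a := (Sum.inl r : V ⊕ W)) (by simp)]
    congr 1
    ext (y | y) <;> simp [h]
  · congr 1
    ext (y | y) <;> simp [h]

end joinGraph

end Subtrees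

section Counting

open scoped Classical in
/-- The sum of `f` over all subtrees of `G`. -/
noncomputable def subtreeSum {V : Type*} [Fintype V] (G : SimpleGraph V) (f : Finset V → ℕ) : ℕ :=
  ∑ S with IsSubtree G S, f S

theorem numSubtrees_eq_subtreeSum {V : Type*} [Fintype V] (G : SimpleGraph V) :
    numSubtrees G = subtreeSum G fun _ => 1 := by
  classical
  rw [numSubtrees, subtreeSum, Finset.sum_const, smul_eq_mul, mul_one, Nat.card_eq_fintype_card,
    Fintype.card_subtype]

theorem totalSubtreeOrder_eq_subtreeSum {V : Type*} [Fintype V] (G : SimpleGraph V) :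
    totalSubtreeOrder G = subtreeSum G Finset.card := by
  classical
  rw [totalSubtreeOrder, subtreeSum]
  congr 1
  ext S
  simp

theorem subtreeSum_iso {V W : Type*} [Fintype V] [Fintype W] {G : SimpleGraph V}
    {H : SimpleGraph W} (e : G ≃g H) (f : Finset W → ℕ) :
    subtreeSum H f = subtreeSum G fun S => f (S.map e.toEquiv.toEmbedding) := by
  classical
  rw [subtreeSum, subtreeSum, Finset.sum_filter, Finset.sum_filter,
    ← e.toEquiv.finsetCongr.sum_comp]
  simp [isSubtree_map_iff]

theorem subtreeSum_joinGraph {V W : Type*} [Fintype V] [Fintype W] {G : SimpleGraph V} {r : V}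
    [DecidableEq V] [DecidableEq W]
    {H : SimpleGraph W} {w : W} (f : Finset (V ⊕ W) → ℕ) :
    subtreeSum (joinGraph G r H w) f =
      subtreeSum G (fun S => f (S.disjSum ∅)) + subtreeSum H (fun T => f (Finset.disjSum ∅ T)) +
      subtreeSum G fun S => if r ∈ S then
        subtreeSum H fun T => if w ∈ T then f (S.disjSum T) else 0 else 0 := by
  classical
  have split : ∀ S T, (if IsSubtree (joinGraph G r H w) (S.disjSum T) then f (S.disjSum T) else 0) =
      (if T = ∅ then if IsSubtree G S then f (S.disjSum T) else 0 else 0) +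
      (if S = ∅ then if IsSubtree H T then f (S.disjSum T) else 0 else 0) +
      (if IsSubtree G S then if r ∈ S then if IsSubtree H T then if w ∈ T then f (S.disjSum T)
        else 0 else 0 else 0 else 0) := by
    intro S T
    rw [isSubtree_joinGraph_iff]
    have hS : S = ∅ → ¬IsSubtree G S := fun h h' => h'.1.ne_empty h
    have hT : T = ∅ → ¬IsSubtree H T := fun h h' => h'.1.ne_empty h
    by_cases h1 : T = ∅ <;> by_cases h2 : S = ∅ <;> simp_all [ite_and]
  simp only [subtreeSum, Finset.sum_filter]
  rw [Fintype.sum_equiv Finset.sumEquiv.toEquiv _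
      (fun p => if IsSubtree (joinGraph G r H w) (p.1.disjSum p.2) then f (p.1.disjSum p.2) else 0)
      (fun S => by
        change _ = if IsSubtree _ (S.toLeft.disjSum S.toRight) then f (S.toLeft.disjSum S.toRight)
          else 0
        rw [Finset.toLeft_disjSum_toRight]),
    Fintype.sum_prod_type]
  simp only [split, Finset.sum_add_distrib]
  refine congr_arg₂ _ (congr_arg₂ _ ?_ ?_) ?_
  · exact Finset.sum_congr rfl fun S _ => by simp
  · rw [Finset.sum_comm]
    exact Finset.sum_congr rfl fun S _ => by simp
  · refine Finset.sum_congr rfl fun S _ => ?_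
    by_cases h1 : IsSubtree G S <;> by_cases h2 : r ∈ S <;> simp [h1, h2]

theorem subtreeSum_zero {V : Type*} [Fintype V] (G : SimpleGraph V) :
    subtreeSum G (fun _ => 0) = 0 := by
  simp [subtreeSum]

theorem subtreeSum_add {V : Type*} [Fintype V] (G : SimpleGraph V) (f g : Finset V → ℕ) :
    subtreeSum G (fun S => f S + g S) = subtreeSum G f + subtreeSum G g :=
  Finset.sum_add_distrib

theorem subtreeSum_mul {V : Type*} [Fintype V] (G : SimpleGraph V) (f : Finset V → ℕ) (c : ℕ) :
    subtreeSum G (fun S => f S * c) = subtreeSum G f * c :=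
  (Finset.sum_mul _ _ _).symm

open scoped Classical in
/-- The number of subtrees containing `r`. -/
noncomputable def numAt {V : Type*} [Fintype V] (G : SimpleGraph V) (r : V) : ℕ :=
  subtreeSum G fun S => if r ∈ S then 1 else 0

open scoped Classical in
/-- The total order of the subtrees containing `r`. -/
noncomputable def totalAt {V : Type*} [Fintype V] (G : SimpleGraph V) (r : V) : ℕ :=
  subtreeSum G fun S => if r ∈ S then S.card else 0

section joinGraph

variable {V W : Type*} [Fintype V] [Fintype W] {G : SimpleGraph V} {r : V} {H : SimpleGraph W}
  {w : W}

theorem numSubtrees_joinGraph :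
    numSubtrees (joinGraph G r H w) = numSubtrees G + numSubtrees H + numAt G r * numAt H w := by
  classical
  simp only [numSubtrees_eq_subtreeSum, subtreeSum_joinGraph, numAt, ← subtreeSum_mul]
  simp

theorem totalSubtreeOrder_joinGraph :
    totalSubtreeOrder (joinGraph G r H w) = totalSubtreeOrder G + totalSubtreeOrder H +
      (totalAt G r * numAt H w + numAt G r * totalAt H w) := by
  classical
  simp only [totalSubtreeOrder_eq_subtreeSum, subtreeSum_joinGraph, numAt, totalAt,
    ← subtreeSum_mul, ← subtreeSum_add, Finset.card_disjSum, Finset.card_empty, add_zero, zero_add]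
  congr 2
  ext S
  split_ifs with h
  · rw [one_mul, mul_comm, ← subtreeSum_mul, ← subtreeSum_add]
    congr 1
    ext T
    split_ifs <;> simp
  · simp

theorem numAt_joinGraph :
    numAt (joinGraph G r H w) (.inl r) = numAt G r * (1 + numAt H w) := by
  classical
  simp only [numAt, subtreeSum_joinGraph, mul_add, ← subtreeSum_mul, Finset.inl_mem_disjSum,
    Finset.notMem_empty, if_false, subtreeSum_zero, mul_one, add_zero]
  congr 2
  ext S
  split_ifs with h <;> simp

theorem totalAt_joinGraph :
    totalAt (joinGraph G r H w) (.inl r) =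
      totalAt G r * (1 + numAt H w) + numAt G r * totalAt H w := by
  classical
  simp only [numAt, totalAt, subtreeSum_joinGraph, mul_add, ← subtreeSum_mul, ← subtreeSum_add,
    Finset.inl_mem_disjSum, Finset.notMem_empty, if_false, subtreeSum_zero, mul_one, add_zero,
    Finset.card_disjSum, Finset.card_empty]
  congr 2
  ext S
  split_ifs with h
  · rw [one_mul, mul_comm, ← subtreeSum_mul, add_assoc, ← subtreeSum_add]
    congr 2
    ext T
    split_ifs <;> simp
  · simp

end joinGraph

end Counting

section Representation

/-- The rooted tree `t` computes the root degree, the order and the subtree statistics of `G`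
rooted at `r`. -/
structure Represents {V : Type*} [Fintype V] (t : PTree) (G : SimpleGraph V) (r : V) : Prop where
  deg : Nat.card (G.neighborSet r) = t.deg
  size : Fintype.card V = t.size
  rootCount : numAt G r = t.rootCount
  rootTotal : totalAt G r = t.rootTotal
  count : numSubtrees G = t.count
  total : totalSubtreeOrder G = t.total

theorem Represents.of_iso {V W : Type*} [Fintype V] [Fintype W] {G : SimpleGraph V}
    {H : SimpleGraph W} {t : PTree} {r : V} (h : Represents t G r) (e : G ≃g H) :
    Represents t H (e r) where
  deg := (Nat.card_congr (e.mapNeighborSet r)).symm.trans h.deg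
  size := (Fintype.card_congr e.toEquiv).symm.trans h.size
  rootCount := by
    classical
    have mem : ∀ S : Finset V, e r ∈ S.map e.toEquiv.toEmbedding ↔ r ∈ S := fun S =>
      Finset.mem_map' e.toEquiv.toEmbedding
    rw [← h.rootCount, numAt, numAt, subtreeSum_iso e]
    simp only [mem]
  rootTotal := by
    classical
    have mem : ∀ S : Finset V, e r ∈ S.map e.toEquiv.toEmbedding ↔ r ∈ S := fun S =>
      Finset.mem_map' e.toEquiv.toEmbedding
    rw [← h.rootTotal, totalAt, totalAt, subtreeSum_iso e]
    simp only [mem, Finset.card_map]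
  count := by
    rw [← h.count, numSubtrees_eq_subtreeSum, numSubtrees_eq_subtreeSum, subtreeSum_iso e]
  total := by
    rw [← h.total, totalSubtreeOrder_eq_subtreeSum, totalSubtreeOrder_eq_subtreeSum,
      subtreeSum_iso e]
    simp only [Finset.card_map]

theorem Represents.join {V W : Type*} [Fintype V] [Fintype W] {G : SimpleGraph V}
    {H : SimpleGraph W} {t u : PTree} {r : V} {w : W} (h : Represents t G r)
    (k : Represents u H w) : Represents (t.join u) (joinGraph G r H w) (.inl r) where
  deg := by
    classical
    rw [card_neighborSet_joinGraph_inl, if_pos rfl, h.deg, PTree.deg]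
  size := by rw [Fintype.card_sum, h.size, k.size, PTree.size]
  rootCount := by rw [numAt_joinGraph, h.rootCount, k.rootCount, PTree.rootCount]
  rootTotal := by
    rw [totalAt_joinGraph, h.rootCount, k.rootCount, h.rootTotal, k.rootTotal, PTree.rootTotal]
  count := by
    rw [numSubtrees_joinGraph, h.count, k.count, h.rootCount, k.rootCount, PTree.count]
  total := by
    rw [totalSubtreeOrder_joinGraph, h.total, k.total, h.rootCount, k.rootCount, h.rootTotal,
      k.rootTotal, PTree.total]

theorem represents_single {V : Type*} [Fintype V] [Subsingleton V] (G : SimpleGraph V) (r : V) :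
    Represents .single G r := by
  classical
  have : Nonempty V := ⟨r⟩
  have card_V : Fintype.card V = 1 := Fintype.card_eq_one_iff.2 ⟨r, fun x => Subsingleton.elim _ _⟩
  have subtrees : (Finset.univ.filter fun S => IsSubtree G S) = {Finset.univ} := by
    ext S
    simp only [Finset.mem_filter, Finset.mem_univ, true_and, Finset.mem_singleton]
    refine ⟨fun h => ?_, ?_⟩
    · obtain ⟨x, hx⟩ := h.1
      exact Finset.eq_univ_of_forall fun y => Subsingleton.elim x y ▸ hx
    · rintro rfl
      exact (isSubtree_univ_iff G).2 SimpleGraph.IsTree.of_subsingleton.connected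
  have sum_eq : ∀ f, subtreeSum G f = f Finset.univ := fun f => by
    rw [subtreeSum]
    convert Finset.sum_singleton f Finset.univ
  constructor
  · have : IsEmpty (G.neighborSet r) := ⟨fun x => G.ne_of_adj x.2 (Subsingleton.elim _ _)⟩
    simp [PTree.deg]
  · exact card_V
  · simp [numAt, sum_eq, PTree.rootCount]
  · simp [totalAt, sum_eq, PTree.rootTotal, card_V]
  · simp [numSubtrees_eq_subtreeSum, sum_eq, PTree.count]
  · simp [totalSubtreeOrder_eq_subtreeSum, sum_eq, PTree.total, card_V]

/-- Every good rooted tree is realized by a graph. -/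
theorem PTree.Good.exists_represents {t : PTree} (ht : t.Good) :
    ∃ (V : Type) (_ : Fintype V) (G : SimpleGraph V) (r : V), G.IsTree ∧
      (∀ v, v ≠ r → Nat.card (G.neighborSet v) ≠ 2) ∧ Represents t G r := by
  induction t with
  | single =>
    exact ⟨Unit, inferInstance, ⊥, (), .of_subsingleton, fun v hv => absurd rfl hv,
      represents_single _ _⟩
  | join t u iht ihu =>
    classical
    obtain ⟨ht, hu, hd⟩ := ht
    obtain ⟨V, _, G, r, hG, hGdeg, hGr⟩ := iht ht
    obtain ⟨W, _, H, w, hH, hHdeg, hHw⟩ := ihu hu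
    refine ⟨V ⊕ W, inferInstance, joinGraph G r H w, .inl r, joinGraph_isTree hG hH, ?_,
      hGr.join hHw⟩
    rintro (v | v) hv
    · have hv : v ≠ r := fun h => hv (h ▸ rfl)
      rw [card_neighborSet_joinGraph_inl, if_neg hv]
      exact hGdeg v hv
    · rw [card_neighborSet_joinGraph_inr]
      split_ifs with h
      · rw [h, hHw.deg]
        omega
      · exact hHdeg v h

/-- Removing an edge of a tree splits it into two trees. -/
theorem SimpleGraph.IsTree.exists_joinGraph_iso {V : Type} [Finite V] {G : SimpleGraph V}
    (hG : G.IsTree) {r w : V} (hrw : G.Adj r w) :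
    ∃ (s : Set V) (hr : r ∈ s) (hw : w ∈ sᶜ),
      (G.induce s).IsTree ∧ (G.induce sᶜ).IsTree ∧
      ∃ e : joinGraph (G.induce s) ⟨r, hr⟩ (G.induce sᶜ) ⟨w, hw⟩ ≃g G,
        (∀ x, e (.inl x) = x) ∧ ∀ x, e (.inr x) = x := by
  classical
  have := Fintype.ofFinite V
  let s : Set V := {x | (G.deleteEdges {s(r, w)}).Reachable r x}
  have hr : r ∈ s := SimpleGraph.Reachable.refl r
  have hw : w ∈ sᶜ := by
    have := SimpleGraph.isAcyclic_iff_forall_adj_isBridge.1 hG.isAcyclic hrw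
    rw [SimpleGraph.isBridge_iff] at this
    exact this
  have cross : ∀ x y, x ∈ s → y ∈ sᶜ → (G.Adj x y ↔ x = r ∧ y = w) := by
    refine fun x y hx hy => ⟨fun hxy => ?_, ?_⟩
    · by_contra hne
      refine hy (hx.trans (SimpleGraph.Adj.reachable ?_))
      rw [SimpleGraph.deleteEdges_adj]
      refine ⟨hxy, fun h => ?_⟩
      rcases Sym2.eq_iff.1 h with h | ⟨rfl, rfl⟩
      · exact hne h
      · exact hw hx
    · rintro ⟨rfl, rfl⟩
      exact hrw
  let e : joinGraph (G.induce s) ⟨r, hr⟩ (G.induce sᶜ) ⟨w, hw⟩ ≃g G :=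
    { toEquiv := Equiv.Set.sumCompl s
      map_rel_iff' := by
        rintro (x | x) (y | y)
        · simp
        · simpa [Subtype.ext_iff] using cross x y x.2 y.2
        · simpa [Subtype.ext_iff, SimpleGraph.adj_comm] using cross y x y.2 x.2
        · simp }
  have conn := joinGraph_connected_iff.1 (e.connected_iff.2 hG.connected)
  exact ⟨s, hr, hw, ⟨conn.1, hG.isAcyclic.induce s⟩, ⟨conn.2, hG.isAcyclic.induce sᶜ⟩, e,
    fun x => Equiv.Set.sumCompl_apply_inl s x, fun x => Equiv.Set.sumCompl_apply_inr s x⟩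

/-- Every tree without vertices of degree two other than the root is represented by a good rooted
tree. -/
theorem exists_good_represents (n : ℕ) : ∀ {V : Type} [Fintype V] (G : SimpleGraph V) (r : V),
    Fintype.card V ≤ n → G.IsTree → (∀ v, v ≠ r → Nat.card (G.neighborSet v) ≠ 2) →
    ∃ t : PTree, t.Good ∧ Represents t G r := by
  induction n with
  | zero =>
    intro V _ G r hV
    have : Nonempty V := ⟨r⟩
    exact absurd hV (by simp [Fintype.card_ne_zero])
  | succ n ih =>
    intro V _ G r hV hG hdeg
    classical
    by_cases hV1 : Subsingleton V
    · exact ⟨.single, trivial, represents_single G r⟩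
    rw [not_subsingleton_iff_nontrivial] at hV1
    obtain ⟨w, hrw⟩ := hG.connected.preconnected.exists_adj_of_nontrivial r
    obtain ⟨s, hr, hw, hs, hsc, e, el, er⟩ := hG.exists_joinGraph_iso hrw
    have hcard : Fintype.card s + Fintype.card (sᶜ : Set V) = Fintype.card V := by
      rw [← Fintype.card_sum, Fintype.card_congr e.toEquiv]
    have hs0 : 0 < Fintype.card s := Fintype.card_pos_iff.2 ⟨⟨r, hr⟩⟩
    have hsc0 : 0 < Fintype.card (sᶜ : Set V) := Fintype.card_pos_iff.2 ⟨⟨w, hw⟩⟩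
    have hdeg' : ∀ x, e x ≠ r → Nat.card
        ((joinGraph (G.induce s) ⟨r, hr⟩ (G.induce sᶜ) ⟨w, hw⟩).neighborSet x) ≠ 2 := by
      intro x hx
      rw [Nat.card_congr (e.mapNeighborSet x)]
      exact hdeg _ hx
    obtain ⟨t, ht, hGt⟩ := ih (G.induce s) ⟨r, hr⟩ (by omega) hs fun v hv => by
      have := hdeg' (.inl v) (by rw [el]; exact fun h => hv (Subtype.ext h))
      rwa [card_neighborSet_joinGraph_inl, if_neg hv] at this
    obtain ⟨u, hu, hGu⟩ := ih (G.induce sᶜ) ⟨w, hw⟩ (by omega) hsc fun v hv => by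
      have := hdeg' (.inr v) (by rw [er]; exact fun h => v.2 (h ▸ hr))
      rwa [card_neighborSet_joinGraph_inr, if_neg hv] at this
    refine ⟨.join t u, ⟨ht, hu, fun h => ?_⟩, ?_⟩
    · have := hdeg' (.inr ⟨w, hw⟩) (by rw [er]; exact hrw.ne')
      rw [card_neighborSet_joinGraph_inr, if_pos rfl, hGu.deg, h] at this
      exact this rfl
    · have := (hGt.join hGu).of_iso e
      rwa [el] at this

end Representation

theorem Represents.subtreeDensity_eq {V : Type*} [Fintype V] {t : PTree} {G : SimpleGraph V}
    {r : V} (h : Represents t G r) : subtreeDensity G = t.total / t.count / t.size := by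
  rw [subtreeDensity, avgSubtreeOrder, h.total, h.count, h.size]

theorem subtreeDensity_mem_Icc {n : ℕ} {G : SimpleGraph (Fin n)} (hG : G.IsTree)
    (hred : SeriesReduced G) (hn : 2 ≤ n) : subtreeDensity G ∈ Set.Icc (1 / 2 : ℝ) (3 / 4) := by
  classical
  have : Nontrivial (Fin n) := Fin.nontrivial_iff_two_le.2 hn
  obtain ⟨r, hr⟩ := hG.exists_vert_degree_one_of_nontrivial
  obtain ⟨t, ht, hGt⟩ := exists_good_represents _ G r le_rfl hG fun v _ => hred v
  have hd : t.deg = 1 := by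
    rw [← hGt.deg, Nat.card_eq_fintype_card, SimpleGraph.card_neighborSet_eq_degree, hr]
  have hc : (0 : ℝ) < t.count := by
    exact_mod_cast Nat.lt_of_lt_of_le t.one_le_rootCount t.rootCount_le_count
  have hs : (0 : ℝ) < t.size := by exact_mod_cast t.one_le_size
  have lower := ht.half_le hd
  have upper := ht.le_three_quarters hd
  rw [hGt.subtreeDensity_eq, div_div, Set.mem_Icc, le_div_iff₀ (by positivity),
    div_le_iff₀ (by positivity)]
  constructor <;> linarith

theorem PTree.Good.exists_fin_graph {t : PTree} (ht : t.Good) (hd : t.deg = 1) :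
    ∃ (n : ℕ) (G : SimpleGraph (Fin n)), G.IsTree ∧ SeriesReduced G ∧ 2 ≤ n ∧
      (t.total / t.count / t.size : ℝ) = subtreeDensity G := by
  obtain ⟨V, _, G, r, hG, hdeg, hGr⟩ := ht.exists_represents
  let e := SimpleGraph.Iso.map (Fintype.equivFin V) G
  refine ⟨Fintype.card V, _, e.isTree_iff.1 hG, fun v => ?_, ?_, ?_⟩
  · obtain ⟨v, rfl⟩ := e.surjective v
    rw [← Nat.card_congr (e.mapNeighborSet v)]
    by_cases hv : v = r
    · rw [hv, hGr.deg, hd]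
      decide
    · exact hdeg v hv
  · rw [hGr.size]
    cases t with
    | single => simp [PTree.deg] at hd
    | join t u => exact add_le_add t.one_le_size u.one_le_size
  · exact (hGr.of_iso e).subtreeDensity_eq.symm

theorem stmt11 :
    (∀ (n : ℕ) (G : SimpleGraph (Fin n)), G.IsTree → SeriesReduced G → 2 ≤ n →
      subtreeDensity G ∈ Set.Icc (1 / 2 : ℝ) (3 / 4)) ∧
    closure {x : ℝ | ∃ (n : ℕ) (G : SimpleGraph (Fin n)), G.IsTree ∧ SeriesReduced G ∧
      2 ≤ n ∧ x = subtreeDensity G} = Set.Icc (1 / 2 : ℝ) (3 / 4) := by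
  refine ⟨fun n G hG hred hn => subtreeDensity_mem_Icc hG hred hn, ?_⟩
  refine Set.Subset.antisymm (closure_minimal ?_ isClosed_Icc) fun x hx => ?_
  · rintro x ⟨n, G, hG, hred, hn, rfl⟩
    exact subtreeDensity_mem_Icc hG hred hn
  · rw [Metric.mem_closure_iff]
    intro ε hε
    obtain ⟨L, j, hL, h⟩ := PTree.exists_broom_near hx hε
    refine ⟨_, (PTree.good_broom hL j).exists_fin_graph rfl, ?_⟩
    rwa [dist_comm, Real.dist_eq]
end

section
/- The set of values {p(T,v) : T a finite tree, v a vertex of T} is dense in the interval [0,1]. -/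
/-- `N(T,v)`: the number of subtrees containing the vertex `v`. -/
noncomputable def numSubtreesContaining {V : Type*} [Fintype V] (G : SimpleGraph V) (v : V) : ℕ :=
  Nat.card {S : Finset V // IsSubtree G S ∧ v ∈ S}

/-- `p(T,v) = N(T,v)/N(T)`: the probability that a uniformly random subtree contains `v`. -/
noncomputable def subtreeProb {V : Type*} [Fintype V] (G : SimpleGraph V) (v : V) : ℝ :=
  (numSubtreesContaining G v : ℝ) / (numSubtrees G : ℝ)


open SimpleGraph Function

lemma isSubtree_map {V W : Type*} {G : SimpleGraph V} {H : SimpleGraph W} (f : G ↪g H)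
    {S : Finset V} : IsSubtree H (S.map f.toEmbedding) ↔ IsSubtree G S := by
  have e : G.induce (S : Set V) ≃g H.induce (S.map f.toEmbedding : Set W) :=
    { toEquiv := (Equiv.Set.image _ _ f.injective).trans (Equiv.setCongr (by simp))
      map_rel_iff' := f.map_rel_iff }
  rw [IsSubtree, IsSubtree, e.connected_iff, Finset.map_nonempty]

section ncard

variable {V : Type*} [Fintype V] (G : SimpleGraph V)

lemma numSubtrees_eq_ncard : numSubtrees G = {S | IsSubtree G S}.ncard := rfl

lemma numSubtreesContaining_eq_ncard (v : V) :
    numSubtreesContaining G v = {S | IsSubtree G S ∧ v ∈ S}.ncard := rfl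

end ncard

/-- The graph obtained from `G` by attaching a new pendant vertex `none` to `v`. -/
def addLeaf {V : Type*} (G : SimpleGraph V) (v : V) : SimpleGraph (Option V) :=
  G.map Embedding.some ⊔ edge none (some v)

section addLeaf

variable {V : Type*} (G : SimpleGraph V) (v : V)

@[simp]
lemma addLeaf_adj_some_some {a b : V} : (addLeaf G v).Adj (some a) (some b) ↔ G.Adj a b := by
  rw [addLeaf, sup_adj, SimpleGraph.map_adj]
  simp [edge_adj]

@[simp]
lemma addLeaf_adj_none_left {x : Option V} : (addLeaf G v).Adj none x ↔ x = some v := by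
  rcases x with _ | x
  · simp
  · rw [addLeaf, sup_adj, SimpleGraph.map_adj]
    simp [edge_adj]

@[simp]
lemma addLeaf_adj_none_right {x : Option V} : (addLeaf G v).Adj x none ↔ x = some v := by
  rw [adj_comm, addLeaf_adj_none_left]

variable {G v}

lemma SimpleGraph.Connected.addLeaf (h : G.Connected) : (addLeaf G v).Connected := by
  rw [connected_iff_exists_forall_reachable]
  refine ⟨some v, fun w => ?_⟩
  rcases w with _ | w
  · exact Adj.reachable (by simp)
  · exact (h.preconnected v w).map ⟨some, fun h => by simpa using h⟩

lemma SimpleGraph.IsTree.addLeaf [Finite V] (h : G.IsTree) : (addLeaf G v).IsTree := by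
  rw [isTree_iff_connected_and_card] at h ⊢
  refine ⟨h.1.addLeaf, ?_⟩
  have hset : (_root_.addLeaf G v).edgeSet
      = insert s(none, some v) (Embedding.some.sym2Map '' G.edgeSet) := by
    rw [_root_.addLeaf, edgeSet_sup, edgeSet_map, edgeSet_edge_of_ne (by simp), Set.union_comm]
    rfl
  have hnot : s(none, some v) ∉ Embedding.some.sym2Map '' G.edgeSet := by
    rintro ⟨e, -, he⟩
    induction e with | _ a b => simp at he
  rw [hset, Nat.card_coe_set_eq, Set.ncard_insert_of_notMem hnot (Set.toFinite _),
    Set.ncard_image_of_injective _ Embedding.some.sym2Map.injective, ← Nat.card_coe_set_eq, h.2,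
    Finite.card_option]

lemma isSubtree_addLeaf_map_some {S : Finset V} :
    IsSubtree (addLeaf G v) (S.map Embedding.some) ↔ IsSubtree G S :=
  isSubtree_map (⟨Embedding.some, by simp⟩ : G ↪g addLeaf G v)

lemma isSubtree_addLeaf_insertNone {S : Finset V} :
    IsSubtree (addLeaf G v) S.insertNone ↔ S = ∅ ∨ IsSubtree G S ∧ v ∈ S := by
  constructor
  · rintro ⟨-, h⟩
    refine S.eq_empty_or_nonempty.imp_right fun ⟨a, ha⟩ => ?_
    have hv : v ∈ S := by
      have : Nontrivial (↑S.insertNone : Set (Option V)) :=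
        ⟨⟨none, by simp⟩, ⟨some a, by simpa using ha⟩, by simp⟩
      obtain ⟨⟨y, hy⟩, hadj⟩ := h.preconnected.exists_adj_of_nontrivial ⟨none, by simp⟩
      simp only [comap_adj, Embedding.subtype_apply, addLeaf_adj_none_left] at hadj
      subst hadj
      simpa using hy
    refine ⟨⟨⟨a, ha⟩, ?_⟩, hv⟩
    let f : (↑S.insertNone : Set (Option V)) → (S : Set V) := fun x =>
      ⟨x.1.getD v, by
        obtain ⟨_ | x, hx⟩ := x
        · exact hv
        · simpa using hx⟩
    have hf : ∀ x y, ((addLeaf G v).induce (↑S.insertNone : Set (Option V))).Reachable x y →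
        (G.induce (S : Set V)).Reachable (f x) (f y) := by
      rintro x y ⟨p⟩
      induction p with
      | nil => rfl
      | @cons x y z hxy _ ih =>
        refine Reachable.trans ?_ ih
        obtain ⟨_ | x, hx⟩ := x <;> obtain ⟨_ | y, hy⟩ := y
        · rfl
        · simp only [comap_adj, Embedding.subtype_apply, addLeaf_adj_none_left,
            Option.some.injEq] at hxy
          subst hxy; rfl
        · simp only [comap_adj, Embedding.subtype_apply, addLeaf_adj_none_right,
            Option.some.injEq] at hxy
          subst hxy; rfl
        · exact Adj.reachable (by simpa [f] using hxy)
    rw [connected_iff_exists_forall_reachable]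
    exact ⟨⟨a, ha⟩, fun ⟨b, hb⟩ => hf ⟨some a, by simpa using ha⟩ ⟨some b, by simpa using hb⟩
      (h.preconnected _ _)⟩
  · rintro (rfl | ⟨⟨-, h⟩, hv⟩)
    · refine ⟨Finset.insertNone_nonempty, ?_⟩
      rw [connected_iff_exists_forall_reachable]
      refine ⟨⟨none, by simp⟩, ?_⟩
      rintro ⟨_ | x, hx⟩
      · rfl
      · simp at hx
    · refine ⟨Finset.insertNone_nonempty, ?_⟩
      rw [connected_iff_exists_forall_reachable]
      refine ⟨⟨some v, by simpa using hv⟩, ?_⟩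
      rintro ⟨_ | x, hx⟩
      · exact Adj.reachable (by simp)
      · exact (h.preconnected ⟨v, hv⟩ ⟨x, by simpa using hx⟩).map
          (⟨fun y => ⟨some y.1, by simp⟩, fun h => by simpa using h⟩ :
            G.induce (S : Set V) →g (addLeaf G v).induce (↑S.insertNone : Set (Option V)))

lemma Finset.exists_eq_map_some_or_eq_insertNone (S : Finset (Option V)) :
    ∃ T : Finset V, S = T.map Embedding.some ∨ S = T.insertNone := by
  classical
  refine ⟨S.eraseNone, ?_⟩
  rw [map_some_eraseNone, insertNone_eraseNone]
  by_cases h : none ∈ S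
  · exact .inr (insert_eq_of_mem h).symm
  · exact .inl (erase_eq_of_notMem h).symm

lemma setOf_isSubtree_addLeaf_none_mem :
    {S | IsSubtree (addLeaf G v) S ∧ none ∈ S} =
      insert (Finset.insertNone ∅) (Finset.insertNone '' {S | IsSubtree G S ∧ v ∈ S}) := by
  ext S
  obtain ⟨T, rfl | rfl⟩ := S.exists_eq_map_some_or_eq_insertNone
  · have h (U : Finset V) : U.insertNone ≠ T.map Embedding.some := fun h => by
      simpa using congrArg (none ∈ ·) h
    simp [h, (h _).symm]
  · simp [isSubtree_addLeaf_insertNone]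

lemma setOf_isSubtree_addLeaf_some_mem :
    {S | IsSubtree (addLeaf G v) S ∧ some v ∈ S} =
      Finset.map Embedding.some '' {S | IsSubtree G S ∧ v ∈ S} ∪
        Finset.insertNone '' {S | IsSubtree G S ∧ v ∈ S} := by
  ext S
  obtain ⟨T, rfl | rfl⟩ := S.exists_eq_map_some_or_eq_insertNone
  · have h (U : Finset V) : U.insertNone ≠ T.map Embedding.some := fun h => by
      simpa using congrArg (none ∈ ·) h
    simp [h, isSubtree_addLeaf_map_some]
  · have h (U : Finset V) : U.map Embedding.some ≠ T.insertNone := fun h => by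
      simpa using congrArg (none ∈ ·) h
    simp only [isSubtree_addLeaf_insertNone, Set.mem_ofPred_eq, Finset.some_mem_insertNone]
    have hT : v ∈ T → T ≠ ∅ := Finset.ne_empty_of_mem
    simp [h]
    tauto

lemma setOf_isSubtree_addLeaf :
    {S | IsSubtree (addLeaf G v) S} =
      Finset.map Embedding.some '' {S | IsSubtree G S} ∪
        {S | IsSubtree (addLeaf G v) S ∧ none ∈ S} := by
  ext S
  obtain ⟨T, rfl | rfl⟩ := S.exists_eq_map_some_or_eq_insertNone
  · simp [isSubtree_addLeaf_map_some]
  · have h (U : Finset V) : U.map Embedding.some ≠ T.insertNone := fun h => by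
      simpa using congrArg (none ∈ ·) h
    simp [h]

variable [Fintype V]

lemma numSubtreesContaining_addLeaf_none :
    numSubtreesContaining (addLeaf G v) none = numSubtreesContaining G v + 1 := by
  rw [numSubtreesContaining_eq_ncard, numSubtreesContaining_eq_ncard,
    setOf_isSubtree_addLeaf_none_mem, Set.ncard_insert_of_notMem _ (Set.toFinite _),
    Set.ncard_image_of_injective _ Finset.insertNone.injective]
  rintro ⟨S, ⟨-, hv⟩, hS⟩
  rw [Finset.insertNone.injective hS] at hv
  simp at hv

lemma numSubtreesContaining_addLeaf_some :
    numSubtreesContaining (addLeaf G v) (some v) = 2 * numSubtreesContaining G v := by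
  rw [numSubtreesContaining_eq_ncard, numSubtreesContaining_eq_ncard,
    setOf_isSubtree_addLeaf_some_mem,
    Set.ncard_union_eq _ (Set.toFinite _) (Set.toFinite _),
    Set.ncard_image_of_injective _ Finset.insertNone.injective,
    Set.ncard_image_of_injective _ (Finset.map_injective _), two_mul]
  rw [Set.disjoint_left]
  rintro _ ⟨S, -, rfl⟩ ⟨T, -, h⟩
  simpa using congrArg (none ∈ ·) h

lemma numSubtrees_addLeaf :
    numSubtrees (addLeaf G v) = numSubtrees G + numSubtreesContaining G v + 1 := by
  rw [add_assoc, ← numSubtreesContaining_addLeaf_none, numSubtreesContaining_eq_ncard,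
    numSubtrees_eq_ncard, numSubtrees_eq_ncard, setOf_isSubtree_addLeaf, Set.ncard_union_eq _ (Set.toFinite _) (Set.toFinite _),
    Set.ncard_image_of_injective _ (Finset.map_injective _)]
  rw [Set.disjoint_left]
  rintro _ ⟨S, -, rfl⟩ ⟨-, h⟩
  simp at h

end addLeaf

section Iso

variable {V W : Type*} {G : SimpleGraph V} {H : SimpleGraph W}

variable [Fintype V] [Fintype W]

lemma SimpleGraph.Iso.subtreeProb_eq (e : G ≃g H) (v : V) :
    subtreeProb H (e v) = subtreeProb G v := by
  have h (S : Finset V) : IsSubtree G S ↔ IsSubtree H (e.toEquiv.finsetCongr S) :=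
    (isSubtree_map (e : G ↪g H)).symm
  have h₁ : numSubtreesContaining G v = numSubtreesContaining H (e v) :=
    Nat.card_congr (e.toEquiv.finsetCongr.subtypeEquiv fun S =>
      and_congr (h S) (Finset.mem_map' e.toEquiv.toEmbedding).symm)
  have h₂ : numSubtrees G = numSubtrees H :=
    Nat.card_congr (e.toEquiv.finsetCongr.subtypeEquiv h)
  rw [subtreeProb, subtreeProb, h₁, h₂]

end Iso

lemma exists_isTree_path (n : ℕ) :
    ∃ (V : Type) (_ : Fintype V) (G : SimpleGraph V) (v : V), G.IsTree ∧
      numSubtreesContaining G v = n + 1 ∧ 2 * numSubtrees G = (n + 1) * (n + 2) := by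
  induction n with
  | zero =>
    have h (S : Finset Unit) : IsSubtree (⊥ : SimpleGraph Unit) S ↔ S = {()} := by
      constructor
      · rintro ⟨⟨x, hx⟩, -⟩
        ext; simpa using hx
      · rintro rfl
        refine ⟨by simp, ?_⟩
        rw [connected_iff_exists_forall_reachable]
        exact ⟨⟨(), by simp⟩, fun w => by rw [Subsingleton.elim w]⟩
    refine ⟨Unit, inferInstance, ⊥, (), .of_subsingleton, ?_, ?_⟩
    · simp only [numSubtreesContaining, h]
      rw [Nat.card_eq_one_iff_unique]
      exact ⟨⟨fun a b => Subtype.ext (a.2.1.trans b.2.1.symm)⟩, ⟨⟨{()}, by simp⟩⟩⟩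
    · simp only [numSubtrees, h]
      simp
  | succ n ih =>
    obtain ⟨V, _, G, v, hG, hv, hN⟩ := ih
    refine ⟨Option V, inferInstance, addLeaf G v, none, hG.addLeaf, ?_, ?_⟩
    · rw [numSubtreesContaining_addLeaf_none, hv]
    · rw [numSubtrees_addLeaf, hv]
      linarith

lemma exists_isTree_broom (n k : ℕ) :
    ∃ (V : Type) (_ : Fintype V) (G : SimpleGraph V) (v : V), G.IsTree ∧
      numSubtreesContaining G v = 2 ^ k * (n + 1) ∧
      2 * numSubtrees G = 2 * (2 ^ k * (n + 1)) + n * (n + 1) + 2 * k := by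
  induction k with
  | zero =>
    obtain ⟨V, _, G, v, hG, hv, hN⟩ := exists_isTree_path n
    exact ⟨V, _, G, v, hG, by simpa using hv, by rw [hN]; ring⟩
  | succ k ih =>
    obtain ⟨V, _, G, v, hG, hv, hN⟩ := ih
    refine ⟨Option V, inferInstance, addLeaf G v, some v, hG.addLeaf, ?_, ?_⟩
    · rw [numSubtreesContaining_addLeaf_some, hv]; ring
    · rw [numSubtrees_addLeaf, hv]
      linarith [pow_succ 2 k, congrArg (· * (n + 1)) (pow_succ 2 k)]

/-- The value of `subtreeProb` at the centre of a broom with `n + 1` path vertices and `k`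
pendant vertices. -/
lemma broom_mem (n k : ℕ) :
    (1 + (n / 2 ^ k + 2 * (k / 2 ^ k) * (1 / (n + 1))) / 2 : ℝ)⁻¹ ∈
      {x : ℝ | ∃ (n : ℕ) (G : SimpleGraph (Fin n)) (v : Fin n),
        G.IsTree ∧ x = subtreeProb G v} := by
  obtain ⟨V, _, G, v, hG, hv, hN⟩ := exists_isTree_broom n k
  let e := G.overFinIso rfl
  refine ⟨_, _, e v, e.isTree_iff.1 hG, ?_⟩
  rw [e.subtreeProb_eq, subtreeProb, hv]
  have hN' : (numSubtrees G : ℝ) = (2 * (2 ^ k * (n + 1)) + n * (n + 1) + 2 * k) / 2 := by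
    rw [eq_div_iff two_ne_zero, mul_comm]
    exact_mod_cast hN
  rw [hN']
  push_cast
  field_simp
  ring

open Filter Topology in
lemma inv_one_add_mem_closure {c : ℝ} (hc : 0 ≤ c) :
    (1 + c)⁻¹ ∈ closure {x : ℝ | ∃ (n : ℕ) (G : SimpleGraph (Fin n)) (v : Fin n),
        G.IsTree ∧ x = subtreeProb G v} := by
  have h₁ : Tendsto (fun k : ℕ => (⌊2 * c * 2 ^ k⌋₊ : ℝ) / 2 ^ k) atTop (𝓝 (2 * c)) :=
    (tendsto_nat_floor_mul_div_atTop (by positivity : 0 ≤ 2 * c)).comp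
      (tendsto_pow_atTop_atTop_of_one_lt (one_lt_two : (1 : ℝ) < 2))
  have h₂ : Tendsto (fun k : ℕ => (k : ℝ) / 2 ^ k) atTop (𝓝 0) := by
    simpa using tendsto_pow_const_div_const_pow_of_one_lt 1 (one_lt_two : (1 : ℝ) < 2)
  have h₃ : Tendsto (fun k : ℕ => 2 * ((k : ℝ) / 2 ^ k) * (1 / ((⌊2 * c * 2 ^ k⌋₊ : ℝ) + 1)))
      atTop (𝓝 0) := by
    refine squeeze_zero (fun k => by positivity) (fun k => ?_)
      (by simpa using h₂.const_mul 2)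
    refine mul_le_of_le_one_right (by positivity) ?_
    rw [div_le_one (by positivity)]
    linarith [Nat.cast_nonneg (α := ℝ) ⌊2 * c * 2 ^ k⌋₊]
  refine mem_closure_of_tendsto (b := atTop) ?_
    (Eventually.of_forall fun k : ℕ => broom_mem ⌊2 * c * 2 ^ k⌋₊ k)
  have := (((h₁.add h₃).div_const 2).const_add 1).inv₀ (by positivity)
  convert this using 3
  ring

theorem stmt12 :
    Set.Icc (0 : ℝ) 1 ⊆
      closure {x : ℝ | ∃ (n : ℕ) (G : SimpleGraph (Fin n)) (v : Fin n),
        G.IsTree ∧ x = subtreeProb G v} := by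
  rw [← closure_Ioo zero_ne_one]
  refine closure_minimal (fun x hx => ?_) isClosed_closure
  have h := inv_one_add_mem_closure (sub_nonneg.2 ((one_le_inv₀ hx.1).2 hx.2.le))
  rwa [add_sub_cancel, inv_inv] at h
end

section
/- For every series-reduced finite tree T with |T| > 2 and every leaf v of T, the value p(T,v) lies in the interval [1/3,1/2]; moreover, the set of values {p(T,v) : T a series-reduced finite tree with |T| > 2, v a leaf of T} is dense in [1/3,1/2]. -/
open SimpleGraph Filter Topology

section Counting

variable {V : Type*} {G : SimpleGraph V} {u c : V}

/-- Adjacency in `G` between two vertices of `S`. -/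
def AdjWithin (G : SimpleGraph V) (S : Finset V) (x y : V) : Prop :=
  G.Adj x y ∧ x ∈ S ∧ y ∈ S

/-- The subtrees containing `u`. -/
def subtreesAt (G : SimpleGraph V) (u : V) : Set (Finset V) :=
  {S | IsSubtree G S ∧ u ∈ S}

/-- The subtrees of the connected component of `u` that avoid `u`. -/
def subtreesOff (G : SimpleGraph V) (u : V) : Set (Finset V) :=
  {S | IsSubtree G S ∧ u ∉ S ∧ ∀ w ∈ S, G.Reachable u w}

lemma mem_subtreesAt_iff {S : Finset V} :
    S ∈ subtreesAt G u ↔ u ∈ S ∧ ∀ w ∈ S, Relation.ReflTransGen (AdjWithin G S) u w := by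
  constructor
  · rintro ⟨⟨-, hconn⟩, hu⟩
    refine ⟨hu, fun w hw ↦ ?_⟩
    have h := (reachable_iff_reflTransGen _ _).1
      (hconn.preconnected (⟨u, hu⟩ : (S : Set V)) ⟨w, hw⟩)
    exact h.lift Subtype.val fun x y hxy ↦ ⟨hxy, x.2, y.2⟩
  · rintro ⟨hu, h⟩
    refine ⟨⟨⟨u, hu⟩, ?_⟩, hu⟩
    rw [connected_iff_exists_forall_reachable]
    refine ⟨⟨u, hu⟩, ?_⟩
    rintro ⟨w, hw⟩
    have key : ∀ z, Relation.ReflTransGen (AdjWithin G S) u z → ∀ hz : z ∈ (S : Set V),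
        (G.induce (S : Set V)).Reachable ⟨u, hu⟩ ⟨z, hz⟩ := by
      intro z hz
      induction hz with
      | refl => exact fun _ ↦ .rfl
      | tail _ hxy ih =>
        intro hz
        exact (ih hxy.2.1).trans (Adj.reachable (by simpa using hxy.1))
    exact key w (h w hw) hw

lemma IsSubtree.reachable {S : Finset V} (hS : IsSubtree G S) {x y : V} (hx : x ∈ S)
    (hy : y ∈ S) : G.Reachable x y :=
  (hS.2.preconnected (⟨x, hx⟩ : (S : Set V)) ⟨y, hy⟩).map (Embedding.induce (S : Set V)).toHom

lemma IsSubtree.mono {H : SimpleGraph V} (hGH : G ≤ H) {S : Finset V} (hS : IsSubtree G S) :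
    IsSubtree H S :=
  ⟨hS.1, hS.2.mono fun _ _ h ↦ hGH h⟩

lemma IsSubtree.of_sup_edge {S : Finset V} (hS : IsSubtree (G ⊔ edge u c) S)
    (huc : ¬ (u ∈ S ∧ c ∈ S)) : IsSubtree G S := by
  refine ⟨hS.1, hS.2.mono ?_⟩
  rintro ⟨x, hx⟩ ⟨y, hy⟩ hxy
  simp only [comap_adj, Function.Embedding.subtype_apply, sup_adj, edge_adj] at hxy ⊢
  simp only [Finset.mem_coe] at hx hy
  grind

lemma reachable_sup_edge_iff {w : V} :
    (G ⊔ edge u c).Reachable u w ↔ G.Reachable u w ∨ G.Reachable c w := by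
  constructor
  · intro h
    rw [reachable_iff_reflTransGen] at h
    induction h with
    | refl => exact .inl .rfl
    | tail _ hxy ih =>
      rw [sup_adj, edge_adj] at hxy
      rcases hxy with hxy | ⟨⟨rfl, rfl⟩ | ⟨rfl, rfl⟩, -⟩
      · exact ih.imp (·.trans hxy.reachable) (·.trans hxy.reachable)
      · exact .inr .rfl
      · exact .inl .rfl
  · have huc : (G ⊔ edge u c).Reachable u c := by
      by_cases h : u = c
      · exact h ▸ .rfl
      · exact Adj.reachable (by simp [edge_adj, h])
    rintro (h | h)
    · exact h.mono le_sup_left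
    · exact huc.trans (h.mono le_sup_left)

open Classical in
lemma exists_union_of_mem_subtreesAt_sup_edge (huc : ¬ G.Reachable u c) {S : Finset V}
    (hS : S ∈ subtreesAt (G ⊔ edge u c) u) (hc : c ∈ S) :
    ∃ A ∈ subtreesAt G u, ∃ B ∈ subtreesAt G c, A ∪ B = S := by
  rw [mem_subtreesAt_iff] at hS
  obtain ⟨hu, hS⟩ := hS
  set A := S.filter (G.Reachable u) with hA
  set B := S.filter (G.Reachable c) with hB
  have split : ∀ w, Relation.ReflTransGen (AdjWithin (G ⊔ edge u c) S) u w →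
      (w ∈ A ∧ Relation.ReflTransGen (AdjWithin G A) u w) ∨
      (w ∈ B ∧ Relation.ReflTransGen (AdjWithin G B) c w) := by
    intro w hw
    induction hw with
    | refl => exact .inl ⟨by simp [hA, hu], .refl⟩
    | @tail x y _ hxy ih =>
      obtain ⟨hadj, hx, hy⟩ := hxy
      rw [sup_adj, edge_adj] at hadj
      rcases hadj with hxy | ⟨⟨rfl, rfl⟩ | ⟨rfl, rfl⟩, -⟩
      · refine ih.imp ?_ ?_
        · rintro ⟨hxA, h⟩
          have hyA : y ∈ A := Finset.mem_filter.2
            ⟨hy, (Finset.mem_filter.1 hxA).2.trans hxy.reachable⟩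
          exact ⟨hyA, h.tail ⟨hxy, hxA, hyA⟩⟩
        · rintro ⟨hxB, h⟩
          have hyB : y ∈ B := Finset.mem_filter.2
            ⟨hy, (Finset.mem_filter.1 hxB).2.trans hxy.reachable⟩
          exact ⟨hyB, h.tail ⟨hxy, hxB, hyB⟩⟩
      · exact .inr ⟨by simp [hB, hy], .refl⟩
      · exact .inl ⟨by simp [hA, hy], .refl⟩
  have disj : ∀ w, w ∈ A → w ∉ B := fun w hwA hwB ↦
    huc ((Finset.mem_filter.1 hwA).2.trans (Finset.mem_filter.1 hwB).2.symm)
  refine ⟨A, mem_subtreesAt_iff.2 ⟨by simp [hA, hu], fun w hw ↦ ?_⟩,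
    B, mem_subtreesAt_iff.2 ⟨by simp [hB, hc], fun w hw ↦ ?_⟩, ?_⟩
  · rcases split w (hS w (Finset.mem_filter.1 hw).1) with h | h
    · exact h.2
    · exact absurd h.1 (disj w hw)
  · rcases split w (hS w (Finset.mem_filter.1 hw).1) with h | h
    · exact absurd hw (disj w h.1)
    · exact h.2
  · ext w
    rw [Finset.mem_union]
    refine ⟨fun h ↦ h.elim (fun h ↦ (Finset.mem_filter.1 h).1) (fun h ↦ (Finset.mem_filter.1 h).1),
      fun h ↦ (split w (hS w h)).imp And.left And.left⟩

open Classical in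
lemma union_mem_subtreesAt_sup_edge (huc : u ≠ c) {A B : Finset V} (hA : A ∈ subtreesAt G u)
    (hB : B ∈ subtreesAt G c) : A ∪ B ∈ subtreesAt (G ⊔ edge u c) u := by
  rw [mem_subtreesAt_iff] at hA hB ⊢
  have hu : u ∈ A ∪ B := Finset.mem_union_left _ hA.1
  have hc : c ∈ A ∪ B := Finset.mem_union_right _ hB.1
  refine ⟨hu, fun w hw ↦ ?_⟩
  rcases Finset.mem_union.1 hw with h | h
  · exact Relation.ReflTransGen.mono (fun x y hxy ↦ ⟨.inl hxy.1, Finset.mem_union_left _ hxy.2.1,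
      Finset.mem_union_left _ hxy.2.2⟩) _ _ (hA.2 w h)
  · refine .head ⟨.inr (by simp [edge_adj, huc]), hu, hc⟩ ?_
    exact Relation.ReflTransGen.mono (fun x y hxy ↦ ⟨.inl hxy.1, Finset.mem_union_right _ hxy.2.1,
      Finset.mem_union_right _ hxy.2.2⟩) _ _ (hB.2 w h)

open Classical in
lemma ncard_subtreesAt_sup_edge [Finite V] (huc : ¬ G.Reachable u c) :
    (subtreesAt (G ⊔ edge u c) u).ncard =
      (subtreesAt G u).ncard * (1 + (subtreesAt G c).ncard) := by
  have hne : u ≠ c := fun h ↦ huc (h ▸ .rfl)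
  have hset : subtreesAt (G ⊔ edge u c) u = subtreesAt G u ∪
      (fun p : Finset V × Finset V ↦ p.1 ∪ p.2) '' (subtreesAt G u ×ˢ subtreesAt G c) := by
    ext S
    constructor
    · intro hS
      by_cases hc : c ∈ S
      · obtain ⟨A, hA, B, hB, rfl⟩ := exists_union_of_mem_subtreesAt_sup_edge huc hS hc
        exact .inr ⟨(A, B), ⟨hA, hB⟩, rfl⟩
      · exact .inl ⟨hS.1.of_sup_edge fun h ↦ hc h.2, hS.2⟩
    · rintro (hS | ⟨⟨A, B⟩, ⟨hA, hB⟩, rfl⟩)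
      · exact ⟨hS.1.mono le_sup_left, hS.2⟩
      · exact union_mem_subtreesAt_sup_edge hne hA hB
  have hdisj : Disjoint (subtreesAt G u)
      ((fun p : Finset V × Finset V ↦ p.1 ∪ p.2) '' (subtreesAt G u ×ˢ subtreesAt G c)) := by
    rw [Set.disjoint_left]
    rintro _ hS ⟨⟨A, B⟩, ⟨hA, hB⟩, rfl⟩
    exact huc (hS.1.reachable hS.2 (Finset.mem_union_right _ hB.2))
  have hinj : Set.InjOn (fun p : Finset V × Finset V ↦ p.1 ∪ p.2)
      (subtreesAt G u ×ˢ subtreesAt G c) := by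
    have hfst : ∀ A ∈ subtreesAt G u, ∀ B ∈ subtreesAt G c,
        A = (A ∪ B).filter (G.Reachable u) ∧ B = (A ∪ B).filter (G.Reachable c) := by
      intro A hA B hB
      have hA' : ∀ w ∈ A, G.Reachable u w := fun w hw ↦ hA.1.reachable hA.2 hw
      have hB' : ∀ w ∈ B, G.Reachable c w := fun w hw ↦ hB.1.reachable hB.2 hw
      have hd : ∀ w, G.Reachable u w → ¬ G.Reachable c w := fun w h h' ↦ huc (h.trans h'.symm)
      constructor <;> ext w <;> simp only [Finset.mem_filter, Finset.mem_union] <;> grind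
    rintro ⟨A, B⟩ ⟨hA, hB⟩ ⟨A', B'⟩ ⟨hA', hB'⟩ h
    have h : A ∪ B = A' ∪ B' := h
    have h₁ := hfst A hA B hB
    have h₂ := hfst A' hA' B' hB'
    rw [← h] at h₂
    exact Prod.ext (h₁.1.trans h₂.1.symm) (h₁.2.trans h₂.2.symm)
  rw [hset, Set.ncard_union_eq hdisj (Set.toFinite _) (Set.toFinite _),
    hinj.ncard_image, Set.ncard_prod, mul_add, mul_one]

lemma ncard_subtreesOff_sup_edge [Finite V] (huc : ¬ G.Reachable u c) :
    (subtreesOff (G ⊔ edge u c) u).ncard =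
      (subtreesOff G u).ncard + (subtreesAt G c).ncard + (subtreesOff G c).ncard := by
  have hset : subtreesOff (G ⊔ edge u c) u =
      subtreesOff G u ∪ subtreesAt G c ∪ subtreesOff G c := by
    ext S
    constructor
    · rintro ⟨hS, hu, h⟩
      have hS' := hS.of_sup_edge fun h ↦ hu h.1
      obtain ⟨x, hx⟩ := hS.1
      rcases reachable_sup_edge_iff.1 (h x hx) with h | h
      · exact .inl (.inl ⟨hS', hu, fun w hw ↦ h.trans (hS'.reachable hx hw)⟩)
      · by_cases hc : c ∈ S
        · exact .inl (.inr ⟨hS', hc⟩)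
        · exact .inr ⟨hS', hc, fun w hw ↦ h.trans (hS'.reachable hx hw)⟩
    · rintro ((⟨hS, hu, h⟩ | ⟨hS, hc⟩) | ⟨hS, hc, h⟩)
      · exact ⟨hS.mono le_sup_left, hu, fun w hw ↦ reachable_sup_edge_iff.2 (.inl (h w hw))⟩
      · exact ⟨hS.mono le_sup_left, fun hu ↦ huc (hS.reachable hu hc),
          fun w hw ↦ reachable_sup_edge_iff.2 (.inr (hS.reachable hc hw))⟩
      · exact ⟨hS.mono le_sup_left, fun hu ↦ huc (h u hu).symm,
          fun w hw ↦ reachable_sup_edge_iff.2 (.inr (h w hw))⟩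
  rw [hset, Set.ncard_union_eq _ (Set.toFinite _) (Set.toFinite _),
    Set.ncard_union_eq _ (Set.toFinite _) (Set.toFinite _)]
  · rw [Set.disjoint_left]
    rintro S ⟨-, -, h⟩ ⟨-, hc⟩
    exact huc (h c hc)
  · rw [Set.disjoint_left]
    rintro S (⟨hS, -, h⟩ | ⟨-, hc⟩) ⟨-, hc', h'⟩
    · obtain ⟨x, hx⟩ := hS.1
      exact huc ((h x hx).trans (h' x hx).symm)
    · exact hc' hc

lemma ncard_subtreesAt_pos [Finite V] (G : SimpleGraph V) (u : V) : 0 < (subtreesAt G u).ncard :=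
  (Set.ncard_pos (Set.toFinite _)).2 ⟨{u},
    mem_subtreesAt_iff.2 ⟨by simp, by simp [Relation.ReflTransGen.refl]⟩⟩

lemma eq_of_reachable_of_neighborSet_eq_empty (hu : G.neighborSet u = ∅) {w : V}
    (h : G.Reachable u w) : w = u := by
  rw [reachable_iff_reflTransGen] at h
  induction h with
  | refl => rfl
  | tail _ hxy ih =>
    subst ih
    exact absurd hxy (Set.eq_empty_iff_forall_notMem.1 hu _)

lemma ncard_subtreesAt_of_isolated (hu : G.neighborSet u = ∅) : (subtreesAt G u).ncard = 1 := by
  rw [Set.ncard_eq_one]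
  refine ⟨{u}, Set.eq_singleton_iff_unique_mem.2 ⟨mem_subtreesAt_iff.2
    ⟨by simp, by simp [Relation.ReflTransGen.refl]⟩, fun S hS ↦ ?_⟩⟩
  exact Finset.eq_singleton_iff_unique_mem.2 ⟨hS.2, fun w hw ↦
    eq_of_reachable_of_neighborSet_eq_empty hu (hS.1.reachable hS.2 hw)⟩

lemma subtreesOff_of_isolated (hu : G.neighborSet u = ∅) : subtreesOff G u = ∅ := by
  rw [Set.eq_empty_iff_forall_notMem]
  rintro S ⟨hS, hu', h⟩
  obtain ⟨x, hx⟩ := hS.1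
  exact hu' (eq_of_reachable_of_neighborSet_eq_empty hu (h x hx) ▸ hx)

lemma numSubtrees_eq [Fintype V] (hG : G.Connected) (u : V) :
    numSubtrees G = (subtreesAt G u).ncard + (subtreesOff G u).ncard := by
  have hset : {S | IsSubtree G S} = subtreesAt G u ∪ subtreesOff G u := by
    ext S
    constructor
    · intro hS
      by_cases hu : u ∈ S
      · exact .inl ⟨hS, hu⟩
      · exact .inr ⟨hS, hu, fun w _ ↦ hG.preconnected u w⟩
    · exact fun h ↦ h.elim And.left And.left
  have hdisj : Disjoint (subtreesAt G u) (subtreesOff G u) := by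
    rw [Set.disjoint_left]
    exact fun S hS hS' ↦ hS'.2.1 hS.2
  rw [← Set.ncard_union_eq hdisj (Set.toFinite _) (Set.toFinite _), ← hset]
  rfl

lemma neighborSet_sup_edge_left (huc : u ≠ c) :
    (G ⊔ edge u c).neighborSet u = insert c (G.neighborSet u) := by
  ext w
  simp only [mem_neighborSet, sup_adj, edge_adj, Set.mem_insert_iff]
  grind

lemma neighborSet_sup_edge_of_ne {w : V} (hu : w ≠ u) (hc : w ≠ c) :
    (G ⊔ edge u c).neighborSet w = G.neighborSet w := by
  ext x
  simp only [mem_neighborSet, sup_adj, edge_adj]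
  grind

lemma ncard_neighborSet_sup_edge_left [Finite V] (huc : ¬ G.Reachable u c) :
    ((G ⊔ edge u c).neighborSet u).ncard = (G.neighborSet u).ncard + 1 := by
  have hne : u ≠ c := fun h ↦ huc (h ▸ .rfl)
  rw [neighborSet_sup_edge_left hne,
    Set.ncard_insert_of_notMem (mt (G.mem_neighborSet u c).1 fun h ↦ huc h.reachable)]

lemma ncard_neighborSet_sup_edge_right [Finite V] (huc : ¬ G.Reachable u c) :
    ((G ⊔ edge u c).neighborSet c).ncard = (G.neighborSet c).ncard + 1 := by
  rw [edge_comm, ncard_neighborSet_sup_edge_left fun h ↦ huc h.symm]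

lemma exists_eq_sup_edge (hG : G.IsAcyclic) (huc : G.Adj u c) :
    ∃ G' : SimpleGraph V, G'.IsAcyclic ∧ ¬ G'.Reachable u c ∧ G = G' ⊔ edge u c := by
  refine ⟨G.deleteEdges {s(u, c)}, hG.anti (deleteEdges_le _),
    isAcyclic_iff_forall_adj_isBridge.1 hG huc, ?_⟩
  ext x y
  simp only [sup_adj, deleteEdges_adj, edge_adj, Set.mem_singleton_iff, Sym2.eq_iff]
  have := huc.symm
  have := huc.ne
  grind

end Counting

section Bounds

variable {V : Type*} {G : SimpleGraph V}

/-- In a forest with root `u` such that no other vertex of the component of `u` has degree `2`,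
the subtrees of this component avoiding `u` are outnumbered by those containing it, except that
a factor `2` is needed when `u` is itself a leaf. -/
lemma subtree_bounds [Finite V] (hG : G.IsAcyclic) (u : V)
    (hdeg : ∀ w, G.Reachable u w → w ≠ u → (G.neighborSet w).ncard ≠ 2) :
    ((G.neighborSet u).ncard ≠ 1 → (subtreesOff G u).ncard + 1 ≤ (subtreesAt G u).ncard) ∧
    ((G.neighborSet u).ncard = 1 → (subtreesOff G u).ncard + 3 ≤ 2 * (subtreesAt G u).ncard) ∧
    (1 ≤ (G.neighborSet u).ncard → 2 ≤ (subtreesAt G u).ncard) ∧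
    (1 ≤ (G.neighborSet u).ncard → 1 ≤ (subtreesOff G u).ncard) := by
  induction hk : G.edgeSet.ncard using Nat.strong_induction_on generalizing G u with
  | _ k ih =>
  subst hk
  by_cases hu : G.neighborSet u = ∅
  · simp [hu, ncard_subtreesAt_of_isolated hu, subtreesOff_of_isolated hu]
  obtain ⟨c, hadj : G.Adj u c⟩ := Set.nonempty_iff_ne_empty.2 hu
  obtain ⟨G', hG', huc, rfl⟩ := exists_eq_sup_edge hG hadj
  have hne : u ≠ c := hadj.ne
  have hlt : G'.edgeSet.ncard < (G' ⊔ edge u c).edgeSet.ncard := by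
    refine Set.ncard_lt_ncard (edgeSet_ssubset_edgeSet.2 (left_lt_sup.2 fun h ↦ ?_))
      (Set.toFinite _)
    exact huc (Adj.reachable (h (by simp [edge_adj, hne])))
  have hdu := ncard_neighborSet_sup_edge_left huc
  have hdc := ncard_neighborSet_sup_edge_right huc
  have hcdeg := hdeg c hadj.reachable hne.symm
  obtain ⟨hu₁, hu₂, hu₃, -⟩ := ih _ hlt hG' u (fun w hw hwu ↦ by
    have hwc : w ≠ c := fun h ↦ huc (h ▸ hw)
    rw [← neighborSet_sup_edge_of_ne hwu hwc]
    exact hdeg w (hw.mono le_sup_left) hwu) rfl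
  obtain ⟨hc₁, -, -, -⟩ := ih _ hlt hG' c (fun w hw hwc ↦ by
    have hwu : w ≠ u := fun h ↦ huc (h ▸ hw).symm
    rw [← neighborSet_sup_edge_of_ne hwu hwc]
    exact hdeg w (reachable_sup_edge_iff.2 (.inr hw)) hwu) rfl
  have hposu := ncard_subtreesAt_pos G' u
  have hposc := ncard_subtreesAt_pos G' c
  rw [ncard_subtreesAt_sup_edge huc, ncard_subtreesOff_sup_edge huc, hdu]
  rw [hdc] at hcdeg
  have hc := hc₁ (by omega)
  have hiso : (G'.neighborSet u).ncard = 0 →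
      (subtreesAt G' u).ncard = 1 ∧ (subtreesOff G' u).ncard = 0 := fun h ↦ by
    have h := (Set.ncard_eq_zero (Set.toFinite _)).1 h
    simp [ncard_subtreesAt_of_isolated h, subtreesOff_of_isolated h]
  generalize (G'.neighborSet u).ncard = d at *
  generalize (subtreesAt G' u).ncard = x at *
  generalize (subtreesOff G' u).ncard = x' at *
  generalize (subtreesAt G' c).ncard = y at *
  generalize (subtreesOff G' c).ncard = y' at *
  refine ⟨fun hd ↦ ?_, fun hd ↦ ?_, fun _ ↦ by nlinarith, fun _ ↦ by omega⟩
  · have hx := hu₃ (by omega)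
    by_cases hd' : d = 1
    · have := hu₂ hd'
      nlinarith
    · have := hu₁ hd'
      nlinarith
  · obtain ⟨rfl, rfl⟩ := hiso (by omega)
    omega

lemma subtreeProb_mem_Icc [Fintype V] (hG : G.IsTree) (hred : SeriesReduced G) {v : V}
    (hcard : 2 < Nat.card V) (hv : (G.neighborSet v).ncard = 1) :
    subtreeProb G v ∈ Set.Icc (1 / 3 : ℝ) (1 / 2) := by
  have hpos := ncard_subtreesAt_pos G v
  have hlower := (subtree_bounds hG.isAcyclic v fun w _ _ ↦ hred w).2.1 hv
  have hupper : (subtreesAt G v).ncard ≤ (subtreesOff G v).ncard := by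
    obtain ⟨c, hc⟩ := Set.ncard_eq_one.1 hv
    have hadj : G.Adj v c := by rw [← mem_neighborSet, hc]; rfl
    obtain ⟨G', hG', hvc, rfl⟩ := exists_eq_sup_edge hG.isAcyclic hadj
    have hv' : G'.neighborSet v = ∅ := by
      rw [← Set.ncard_eq_zero (Set.toFinite _)]
      have := ncard_neighborSet_sup_edge_left hvc
      omega
    have hne : v ≠ c := hadj.ne
    have hdeg : 1 ≤ (G'.neighborSet c).ncard := by
      by_contra! h
      have hc' : G'.neighborSet c = ∅ := by
        rw [← Set.ncard_eq_zero (Set.toFinite _)]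
        omega
      have huniv : (Set.univ : Set V) ⊆ {v, c} := by
        intro w _
        rcases reachable_sup_edge_iff.1 (hG.connected.preconnected v w) with h | h
        · exact .inl (eq_of_reachable_of_neighborSet_eq_empty hv' h)
        · exact .inr (eq_of_reachable_of_neighborSet_eq_empty hc' h)
      have := Set.ncard_le_ncard huniv (Set.toFinite _)
      rw [Set.ncard_univ, Set.ncard_pair hne] at this
      omega
    have hoff := (subtree_bounds hG' c fun w _ hw ↦ by
      by_cases hwv : w = v
      · subst hwv
        simp [hv']
      · rw [← neighborSet_sup_edge_of_ne hwv hw]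
        exact hred w).2.2.2 hdeg
    rw [ncard_subtreesAt_sup_edge hvc, ncard_subtreesOff_sup_edge hvc,
      ncard_subtreesAt_of_isolated hv']
    omega
  have hprob : subtreeProb G v = ((subtreesAt G v).ncard : ℝ) /
      ((subtreesAt G v).ncard + (subtreesOff G v).ncard : ℕ) := by
    rw [← numSubtrees_eq hG.connected v]
    rfl
  have h₁ : ((subtreesOff G v).ncard : ℝ) + 3 ≤ 2 * (subtreesAt G v).ncard := by
    exact_mod_cast hlower
  have h₂ : ((subtreesAt G v).ncard : ℝ) ≤ (subtreesOff G v).ncard := by exact_mod_cast hupper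
  have h₃ : (0 : ℝ) < (subtreesAt G v).ncard := by exact_mod_cast hpos
  rw [hprob, Nat.cast_add, Set.mem_Icc, div_le_div_iff₀ (by norm_num) (by linarith),
    div_le_div_iff₀ (by linarith) (by norm_num)]
  constructor <;> linarith

end Bounds

section Density

/-- A rooted tree with `m` vertices, `a` subtrees containing the root, `b` subtrees avoiding it,
root degree `d` and no other vertex of degree `2` exists on every large enough vertex set, the
remaining vertices being isolated. -/
def Realizable (m a b d : ℕ) : Prop :=
  ∀ n, m ≤ n → ∃ (G : SimpleGraph (Fin n)) (v : Fin n), G.IsAcyclic ∧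
    {w | G.Reachable v w}.ncard = m ∧ (∀ w, ¬ G.Reachable v w → G.neighborSet w = ∅) ∧
    (subtreesAt G v).ncard = a ∧ (subtreesOff G v).ncard = b ∧
    (G.neighborSet v).ncard = d ∧ ∀ w, w ≠ v → (G.neighborSet w).ncard ≠ 2

lemma realizable_singleton : Realizable 1 1 0 0 := by
  intro n hn
  have hiso : ∀ w : Fin n, (⊥ : SimpleGraph (Fin n)).neighborSet w = ∅ := fun w ↦ by
    ext; simp
  refine ⟨⊥, ⟨0, hn⟩, isAcyclic_bot, ?_, fun w _ ↦ hiso w, ncard_subtreesAt_of_isolated (hiso _),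
    ?_, ?_, ?_⟩
  · simp [reachable_bot]
  · simp [subtreesOff_of_isolated (hiso _)]
  · simp
  · simp

lemma exists_not_reachable {n m : ℕ} (hmn : m + 1 ≤ n) {G : SimpleGraph (Fin n)} {v : Fin n}
    (hm : {w | G.Reachable v w}.ncard = m) : ∃ w, ¬ G.Reachable v w := by
  by_contra! h
  have : {w | G.Reachable v w} = Set.univ := Set.eq_univ_of_forall h
  rw [this, Set.ncard_univ, Nat.card_fin] at hm
  omega

lemma ncard_reachable_sup_edge {V : Type*} [Finite V] {G : SimpleGraph V} {v c : V}
    (hvc : ¬ G.Reachable v c) (hc : G.neighborSet c = ∅) :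
    {w | (G ⊔ edge v c).Reachable v w}.ncard = {w | G.Reachable v w}.ncard + 1 := by
  rw [← Set.ncard_insert_of_notMem (s := {w | G.Reachable v w}) hvc]
  congr 1
  ext w
  simp only [reachable_sup_edge_iff, Set.mem_insert_iff, Set.mem_ofPred_eq]
  constructor
  · rintro (h | h)
    · exact .inr h
    · exact .inl (eq_of_reachable_of_neighborSet_eq_empty hc h)
  · rintro (rfl | h)
    · exact .inr .rfl
    · exact .inl h

/-- Attach a leaf to the root. -/
lemma Realizable.addLeaf {m a b d : ℕ} (h : Realizable m a b d) :
    Realizable (m + 1) (2 * a) (b + 1) (d + 1) := by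
  intro n hn
  obtain ⟨G, v, hG, hm, hiso, rfl, rfl, rfl, hdeg⟩ := h n (by omega)
  obtain ⟨c, hvc⟩ := exists_not_reachable hn hm
  have hc := hiso c hvc
  refine ⟨G ⊔ edge v c, v, hG.sup_edge_of_not_reachable hvc, ?_, ?_, ?_, ?_,
    ncard_neighborSet_sup_edge_left hvc, ?_⟩
  · rw [ncard_reachable_sup_edge hvc hc, hm]
  · intro w hw
    rw [reachable_sup_edge_iff, not_or] at hw
    have hwv : w ≠ v := fun h ↦ hw.1 (h ▸ .rfl)
    have hwc : w ≠ c := fun h ↦ hw.2 (h ▸ .rfl)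
    rw [neighborSet_sup_edge_of_ne hwv hwc]
    exact hiso w hw.1
  · rw [ncard_subtreesAt_sup_edge hvc, ncard_subtreesAt_of_isolated hc, mul_comm]
  · rw [ncard_subtreesOff_sup_edge hvc, ncard_subtreesAt_of_isolated hc,
      subtreesOff_of_isolated hc, Set.ncard_empty]
  · intro w hw
    by_cases hwc : w = c
    · rw [hwc, ncard_neighborSet_sup_edge_right hvc, hc, Set.ncard_empty]
      omega
    · rw [neighborSet_sup_edge_of_ne hw hwc]
      exact hdeg w hw

/-- Attach a new vertex to the root and make it the new root. -/
lemma Realizable.addRoot {m a b d : ℕ} (h : Realizable m a b d) (hd : d ≠ 1) :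
    Realizable (m + 1) (1 + a) (a + b) 1 := by
  intro n hn
  obtain ⟨G, v, hG, hm, hiso, rfl, rfl, rfl, hdeg⟩ := h n (by omega)
  obtain ⟨c, hvc⟩ := exists_not_reachable hn hm
  have hc := hiso c hvc
  have hcv : ¬ G.Reachable c v := fun h ↦ hvc h.symm
  have hroot : ∀ w, (G ⊔ edge v c).Reachable c w ↔ (G ⊔ edge v c).Reachable v w := fun w ↦ by
    have := reachable_sup_edge_iff (G := G) (u := v) (c := c) (w := c) |>.2 (.inr .rfl)
    exact ⟨this.trans, this.symm.trans⟩
  refine ⟨G ⊔ edge v c, c, hG.sup_edge_of_not_reachable hvc, ?_, ?_, ?_, ?_, ?_, ?_⟩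
  · simp only [hroot]
    rw [ncard_reachable_sup_edge hvc hc, hm]
  · intro w hw
    rw [hroot, reachable_sup_edge_iff, not_or] at hw
    have hwv : w ≠ v := fun h ↦ hw.1 (h ▸ .rfl)
    have hwc : w ≠ c := fun h ↦ hw.2 (h ▸ .rfl)
    rw [neighborSet_sup_edge_of_ne hwv hwc]
    exact hiso w hw.1
  · rw [edge_comm, ncard_subtreesAt_sup_edge hcv, ncard_subtreesAt_of_isolated hc, one_mul]
  · rw [edge_comm, ncard_subtreesOff_sup_edge hcv, subtreesOff_of_isolated hc, Set.ncard_empty,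
      zero_add]
  · rw [ncard_neighborSet_sup_edge_right hvc, hc, Set.ncard_empty]
  · intro w hw
    by_cases hwv : w = v
    · rw [hwv, ncard_neighborSet_sup_edge_left hvc]
      omega
    · rw [neighborSet_sup_edge_of_ne hwv hw]
      exact hdeg w hwv

lemma Realizable.addLeaves {m a b d : ℕ} (h : Realizable m a b d) (k : ℕ) :
    Realizable (m + k) (2 ^ k * a) (b + k) (d + k) := by
  induction k with
  | zero => simpa using h
  | succ k ih =>
    have := ih.addLeaf
    rwa [← mul_assoc, ← pow_succ'] at this

/-- The values of `p(T, v)` for leaves `v` of series-reduced trees `T` with more than two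
vertices. -/
def leafProbs : Set ℝ :=
  {x : ℝ | ∃ (n : ℕ) (G : SimpleGraph (Fin n)) (v : Fin n),
    G.IsTree ∧ SeriesReduced G ∧ 2 < n ∧ Nat.card (G.neighborSet v) = 1 ∧ x = subtreeProb G v}

lemma Realizable.mem_leafProbs {m a b d : ℕ} (h : Realizable m a b d) (hm : 2 ≤ m)
    (hd : d ≠ 1) : ((1 + a : ℕ) : ℝ) / ((1 + a) + (a + b) : ℕ) ∈ leafProbs := by
  obtain ⟨G, v, hG, hm', -, ha, hb, hdv, hdeg⟩ := h.addRoot hd (m + 1) le_rfl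
  have hreach : ∀ w, G.Reachable v w := by
    have := Set.eq_of_subset_of_ncard_le (Set.subset_univ {w | G.Reachable v w})
      (by rw [hm', Set.ncard_univ, Nat.card_fin]) (Set.toFinite _)
    exact Set.eq_univ_iff_forall.1 this
  have hconn : G.Connected := connected_iff_exists_forall_reachable _ |>.2 ⟨v, hreach⟩
  refine ⟨m + 1, G, v, ⟨hconn, hG⟩, fun w ↦ ?_, by omega, hdv, ?_⟩
  · change (G.neighborSet w).ncard ≠ 2
    by_cases hw : w = v
    · rw [hw, hdv]
      omega
    · exact hdeg w hw
  · rw [subtreeProb, numSubtrees_eq hconn v, ← ha, ← hb]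
    rfl

/-- Limits of the ratio between the numbers of subtrees avoiding and containing the root, along
rooted trees of growing size. -/
def limitRatios : Set ℝ :=
  {x | ∃ m a b d : ℕ → ℕ, (∀ i, Realizable (m i) (a i) (b i) (d i)) ∧ (∀ i, 2 ≤ m i) ∧
    (∀ i, d i ≠ 1) ∧ Tendsto (fun i ↦ (a i : ℝ)) atTop atTop ∧
    Tendsto (fun i ↦ (b i : ℝ) / a i) atTop (𝓝 x)}

lemma zero_mem_limitRatios : (0 : ℝ) ∈ limitRatios := by
  refine ⟨fun i ↦ 1 + (i + 2), fun i ↦ 2 ^ (i + 2) * 1, fun i ↦ 0 + (i + 2), fun i ↦ 0 + (i + 2),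
    fun i ↦ realizable_singleton.addLeaves (i + 2), fun i ↦ by dsimp only; omega,
    fun i ↦ by dsimp only; omega, ?_, ?_⟩
  · have := (tendsto_pow_atTop_atTop_of_one_lt (one_lt_two (α := ℝ))).comp (tendsto_add_atTop_nat 2)
    simpa [Function.comp_def] using this
  · have := (tendsto_pow_const_div_const_pow_of_one_lt 1 (one_lt_two (α := ℝ))).comp
      (tendsto_add_atTop_nat 2)
    simpa [Function.comp_def] using this

lemma limitRatios_step {y : ℝ} (hy : y ∈ limitRatios) (k : ℕ) (hk : 1 ≤ k) :
    (1 + y) / 2 ^ k ∈ limitRatios := by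
  obtain ⟨m, a, b, d, h, hm, hd, ha, hlim⟩ := hy
  refine ⟨fun i ↦ m i + 1 + k, fun i ↦ 2 ^ k * (1 + a i), fun i ↦ a i + b i + k,
    fun i ↦ 1 + k, fun i ↦ ((h i).addRoot (hd i)).addLeaves k,
    fun i ↦ (hm i).trans (by dsimp only; omega), fun i ↦ by dsimp only; omega, ?_, ?_⟩
  · push_cast
    exact (tendsto_atTop_add_const_left _ 1 ha).const_mul_atTop (by positivity)
  · have hinv := ha.inv_tendsto_atTop
    have hnum := (hlim.const_add 1).add (hinv.const_mul (k : ℝ))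
    have hden := (hinv.add_const 1).const_mul ((2 : ℝ) ^ k)
    have := hnum.div hden (by simp)
    simp only [mul_zero, add_zero, zero_add, mul_one] at this
    refine this.congr' ?_
    filter_upwards [ha.eventually_gt_atTop 0] with i hi
    simp only [Pi.div_apply, Pi.inv_apply]
    push_cast
    field_simp

lemma Icc_subset_closure_limitRatios : Set.Icc (0 : ℝ) 1 ⊆ closure limitRatios := by
  have approx : ∀ n : ℕ, ∀ x ∈ Set.Icc (0 : ℝ) 1, ∃ y ∈ limitRatios, |x - y| ≤ (1 / 2) ^ n := by
    intro n
    induction n with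
    | zero =>
      rintro x ⟨hx₀, hx₁⟩
      exact ⟨0, zero_mem_limitRatios, by rw [abs_le]; constructor <;> norm_num <;> linarith⟩
    | succ n ih =>
      rintro x ⟨hx₀, hx₁⟩
      rcases hx₀.eq_or_lt with rfl | hx₀
      · exact ⟨0, zero_mem_limitRatios, by simp⟩
      obtain ⟨k, hk₁, hk₂⟩ := exists_nat_pow_near (one_le_inv_iff₀.2 ⟨hx₀, hx₁⟩)
        (one_lt_two (α := ℝ))
      have hpow : (0 : ℝ) < 2 ^ (k + 1) := by positivity
      have h₁ : 2 ^ k * x ≤ 1 := by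
        rwa [← le_div_iff₀ hx₀, one_div]
      have h₂ : 1 < 2 ^ (k + 1) * x := by
        rwa [← div_lt_iff₀ hx₀, one_div]
      obtain ⟨y, hy, hxy⟩ := ih (2 ^ (k + 1) * x - 1) ⟨by linarith, by rw [pow_succ]; linarith⟩
      refine ⟨(1 + y) / 2 ^ (k + 1), limitRatios_step hy (k + 1) (by omega), ?_⟩
      have heq : x - (1 + y) / 2 ^ (k + 1) = (2 ^ (k + 1) * x - 1 - y) / 2 ^ (k + 1) := by
        field_simp
        ring
      rw [heq, abs_div, abs_of_pos hpow, div_le_iff₀ hpow]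
      have htwo : (1 : ℝ) ≤ 2 ^ k := one_le_pow₀ one_le_two
      calc |2 ^ (k + 1) * x - 1 - y| ≤ (1 / 2) ^ n := hxy
        _ = (1 / 2) ^ n * 1 := (mul_one _).symm
        _ ≤ (1 / 2) ^ n * 2 ^ k := by gcongr
        _ = (1 / 2) ^ (n + 1) * 2 ^ (k + 1) := by ring
  intro x hx
  rw [Metric.mem_closure_iff]
  intro ε hε
  obtain ⟨n, hn⟩ := exists_pow_lt_of_lt_one hε (one_half_lt_one (α := ℝ))
  obtain ⟨y, hy, hxy⟩ := approx n x hx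
  exact ⟨y, hy, hxy.trans_lt hn⟩

lemma one_div_two_add_mem_closure_leafProbs {x : ℝ} (hx : x ∈ limitRatios) :
    1 / (2 + x) ∈ closure leafProbs := by
  obtain ⟨m, a, b, d, h, hm, hd, ha, hlim⟩ := hx
  have hx : 0 ≤ x := ge_of_tendsto' hlim fun i ↦ by positivity
  refine mem_closure_of_tendsto (b := atTop) ?_
    (Eventually.of_forall fun i ↦ (h i).mem_leafProbs (hm i) (hd i))
  have hinv := ha.inv_tendsto_atTop
  have := (hinv.add_const 1).div ((hinv.add_const 2).add hlim) (by positivity)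
  simp only [zero_add] at this
  refine this.congr' ?_
  filter_upwards [ha.eventually_gt_atTop 0] with i hi
  simp only [Pi.div_apply, Pi.inv_apply]
  push_cast
  field_simp
  ring_nf

end Density

theorem stmt13 :
    (∀ (n : ℕ) (G : SimpleGraph (Fin n)) (v : Fin n), G.IsTree → SeriesReduced G →
      2 < n → Nat.card (G.neighborSet v) = 1 →
      subtreeProb G v ∈ Set.Icc (1 / 3 : ℝ) (1 / 2)) ∧
    closure {x : ℝ | ∃ (n : ℕ) (G : SimpleGraph (Fin n)) (v : Fin n),
      G.IsTree ∧ SeriesReduced G ∧ 2 < n ∧ Nat.card (G.neighborSet v) = 1 ∧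
      x = subtreeProb G v} = Set.Icc (1 / 3 : ℝ) (1 / 2) := by
  have hbounds : ∀ (n : ℕ) (G : SimpleGraph (Fin n)) (v : Fin n), G.IsTree → SeriesReduced G →
      2 < n → Nat.card (G.neighborSet v) = 1 →
      subtreeProb G v ∈ Set.Icc (1 / 3 : ℝ) (1 / 2) := fun n G v hG hred hn hv ↦
    subtreeProb_mem_Icc hG hred (by rwa [Nat.card_fin]) hv
  refine ⟨hbounds, Set.Subset.antisymm (closure_minimal ?_ isClosed_Icc) ?_⟩
  · rintro _ ⟨n, G, v, hG, hred, hn, hv, rfl⟩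
    exact hbounds n G v hG hred hn hv
  · rintro t ⟨ht₁, ht₂⟩
    have ht : 0 < t := by linarith
    have hx : 1 / t - 2 ∈ Set.Icc (0 : ℝ) 1 := by
      rw [Set.mem_Icc, sub_nonneg, sub_le_iff_le_add, le_div_iff₀ ht, div_le_iff₀ ht]
      constructor <;> linarith
    have hne : 2 + (1 / t - 2) ≠ 0 := by
      rw [add_sub_cancel]
      positivity
    have hcont : ContinuousAt (fun x : ℝ ↦ 1 / (2 + x)) (1 / t - 2) := by
      fun_prop (disch := exact hne)
    have himage : (fun x : ℝ ↦ 1 / (2 + x)) '' limitRatios ⊆ closure leafProbs :=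
      Set.image_subset_iff.2 fun x hx ↦ one_div_two_add_mem_closure_leafProbs hx
    have hmem := closure_minimal himage isClosed_closure
      (mem_closure_image hcont (Icc_subset_closure_limitRatios hx))
    rwa [add_sub_cancel, one_div_one_div] at hmem
end

section
/- Let T be a finite tree with at least three vertices and let v be a leaf of T. Then the number of subtrees of T not containing v is at least the number of subtrees of T containing v; equivalently, N(T) ≥ 2·N(T,v), so p(T,v) ≤ 1/2. -/
/-- A subtree containing a leaf `v` and another vertex also contains the neighbour of `v`. -/
theorem IsSubtree.neighbor_mem {V : Type*} {G : SimpleGraph V} {S : Finset V} {u v x : V}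
    (hS : IsSubtree G S) (huv : ∀ y, G.Adj v y → y = u) (hv : v ∈ S) (hx : x ∈ S)
    (hxv : x ≠ v) : u ∈ S := by
  obtain ⟨p⟩ := hS.2.preconnected ⟨v, hv⟩ ⟨x, hx⟩
  cases p with
  | nil => exact absurd rfl hxv
  | @cons _ y _ h _ => exact huv y.1 h ▸ y.2

/-- Deleting a leaf from a subtree with another vertex leaves a subtree. -/
theorem IsSubtree.erase_leaf {V : Type*} [DecidableEq V] {G : SimpleGraph V} {S : Finset V}
    {u v : V} (hS : IsSubtree G S) (huv : ∀ y, G.Adj v y → y = u) (hne : u ≠ v) (hu : u ∈ S) :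
    IsSubtree G (S.erase v) := by
  have hu' : u ∈ S.erase v := Finset.mem_erase.2 ⟨hne, hu⟩
  let f : ((S : Set V) : Type _) → ((S.erase v : Finset V) : Set V) := fun a =>
    if h : a.1 = v then ⟨u, hu'⟩ else ⟨a.1, Finset.mem_erase.2 ⟨h, a.2⟩⟩
  have hf : ∀ a b, (G.induce (S : Set V)).Adj a b →
      (G.induce ((S.erase v : Finset V) : Set V)).Reachable (f a) (f b) := by
    intro a b hab
    have hab' : G.Adj a.1 b.1 := hab
    by_cases ha : a.1 = v
    · have hb : b.1 = u := huv _ (ha ▸ hab')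
      have : f a = f b := Subtype.ext (by simp [f, ha, hb, hne])
      rw [this]
    · by_cases hb : b.1 = v
      · have ha' : a.1 = u := huv _ (hb ▸ hab'.symm)
        have : f a = f b := Subtype.ext (by simp [f, ha', hb, hne])
        rw [this]
      · apply SimpleGraph.Adj.reachable
        simpa [f, ha, hb] using hab'
  have hwalk : ∀ a b, (G.induce (S : Set V)).Walk a b →
      (G.induce ((S.erase v : Finset V) : Set V)).Reachable (f a) (f b) := by
    intro a b p
    induction p with
    | nil => exact .refl _
    | cons h _ ih => exact (hf _ _ h).trans ih
  have hid : ∀ a : ((S.erase v : Finset V) : Set V),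
      f ⟨a.1, Finset.mem_of_mem_erase a.2⟩ = a := fun a =>
    Subtype.ext (by simp [f, Finset.ne_of_mem_erase a.2])
  refine ⟨⟨u, hu'⟩, (SimpleGraph.connected_iff _).2 ⟨fun a b => ?_, ⟨⟨u, hu'⟩⟩⟩⟩
  obtain ⟨p⟩ := hS.2.preconnected ⟨a.1, Finset.mem_of_mem_erase a.2⟩
    ⟨b.1, Finset.mem_of_mem_erase b.2⟩
  simpa only [hid] using hwalk _ _ p

theorem isSubtree_singleton {V : Type*} (G : SimpleGraph V) (w : V) : IsSubtree G {w} := by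
  have : Subsingleton (({w} : Finset V) : Set V) := by
    simp
  exact ⟨⟨w, by simp⟩, (SimpleGraph.connected_iff _).2
    ⟨SimpleGraph.Preconnected.of_subsingleton, ⟨⟨w, by simp⟩⟩⟩⟩

/-- Deleting the leaf `v`, and sending `{v}` to a singleton `{w}` with `w` not adjacent to `v`,
injects the subtrees containing `v` into those avoiding `v`. -/
theorem numSubtreesContaining_leaf_le {V : Type*} [Fintype V] {G : SimpleGraph V} {u v w : V}
    (huv : ∀ y, G.Adj v y → y = u) (hne : u ≠ v) (hwu : w ≠ u) (hwv : w ≠ v) :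
    numSubtreesContaining G v ≤ Nat.card {S : Finset V // IsSubtree G S ∧ v ∉ S} := by
  classical
  have hmem : ∀ S : Finset V, IsSubtree G S → v ∈ S → S ≠ {v} → u ∈ S := by
    intro S hS hv hSv
    obtain ⟨x, hx, hxv⟩ : ∃ x ∈ S, x ≠ v := by
      by_contra! h
      exact hSv (Finset.eq_singleton_iff_unique_mem.2 ⟨hv, h⟩)
    exact hS.neighbor_mem huv hv hx hxv
  let f : {S : Finset V // IsSubtree G S ∧ v ∈ S} → {S : Finset V // IsSubtree G S ∧ v ∉ S} :=
    fun S => if h : S.1 = {v} then ⟨{w}, isSubtree_singleton G w, by simpa using hwv.symm⟩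
      else ⟨S.1.erase v, S.2.1.erase_leaf huv hne (hmem _ S.2.1 S.2.2 h), by simp⟩
  have hw : ∀ S : Finset V, u ∈ S → S.erase v ≠ {w} := by
    intro S hS h
    have : u ∈ S.erase v := Finset.mem_erase.2 ⟨hne, hS⟩
    rw [h, Finset.mem_singleton] at this
    exact hwu this.symm
  refine Nat.card_le_card_of_injective f ?_
  rintro ⟨S, hS, hvS⟩ ⟨S', hS', hvS'⟩ h
  have h' := congrArg Subtype.val h
  apply Subtype.ext
  by_cases h1 : S = {v} <;> by_cases h2 : S' = {v}
  · exact h1.trans h2.symm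
  · simp only [f, h1, h2, dite_true, dite_false] at h'
    exact absurd h'.symm (hw _ (hmem _ hS' hvS' h2))
  · simp only [f, h1, h2, dite_true, dite_false] at h'
    exact absurd h' (hw _ (hmem _ hS hvS h1))
  · simp only [f, h1, h2, dite_false] at h'
    exact (Finset.insert_erase hvS).symm.trans (h' ▸ Finset.insert_erase hvS')

theorem numSubtrees_eq_add {V : Type*} [Fintype V] (G : SimpleGraph V) (v : V) :
    numSubtrees G =
      numSubtreesContaining G v + Nat.card {S : Finset V // IsSubtree G S ∧ v ∉ S} := by
  classical
  simp only [numSubtrees, numSubtreesContaining, Nat.card_eq_fintype_card, Fintype.card_subtype,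
    ← Finset.filter_filter]
  exact (Finset.card_filter_add_card_filter_not _).symm

theorem stmt15 {V : Type*} [Fintype V] (G : SimpleGraph V) (hG : G.IsTree)
    (h3 : 3 ≤ Fintype.card V) (v : V) (hv : Nat.card (G.neighborSet v) = 1) :
    numSubtreesContaining G v ≤ Nat.card {S : Finset V // IsSubtree G S ∧ v ∉ S} ∧
    2 * numSubtreesContaining G v ≤ numSubtrees G ∧
    subtreeProb G v ≤ 1 / 2 := by
  classical
  obtain ⟨hsub, ⟨u, hu⟩⟩ := Nat.card_eq_one_iff_unique.1 hv
  have huv : ∀ y, G.Adj v y → y = u := fun y hy =>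
    congrArg Subtype.val (hsub.elim (⟨y, hy⟩ : G.neighborSet v) ⟨u, hu⟩)
  have hne : u ≠ v := (G.ne_of_adj hu).symm
  obtain ⟨w, hw⟩ : ∃ w, w ∉ ({u, v} : Finset V) := by
    by_contra! h
    have h1 := Finset.card_le_two (a := u) (b := v)
    rw [Finset.eq_univ_of_forall h, Finset.card_univ] at h1
    omega
  simp only [Finset.mem_insert, Finset.mem_singleton, not_or] at hw
  have h1 := numSubtreesContaining_leaf_le huv hne hw.1 hw.2
  have h2 : 2 * numSubtreesContaining G v ≤ numSubtrees G := by
    rw [numSubtrees_eq_add G v]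
    omega
  refine ⟨h1, h2, div_le_of_le_mul₀ (by positivity) (by norm_num) ?_⟩
  have h2' : (2 : ℝ) * numSubtreesContaining G v ≤ numSubtrees G := by exact_mod_cast h2
  linarith
end
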